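/- Let P be a centrally symmetric convex dodecagon (a convex polygon with exactly 12 vertices, symmetric about a point). If P admits a k-fold translative tiling of the plane for some positive integer k, then k ≥ 6; that is, τ(P) ≥ 6. -/

import Mathlib

open Pointwise

/-- `K + X` is a `k`-fold translative tiling of the plane: the translate multiset
`(x i)` is discrete, every point of the plane belongs to at least `k` of the translates
`K + x i`, and every point belongs to at most `k` of the translates `interior K + x i`
(multiplicity counted over the index set). -/
def IsKFoldTranslativeTiling {ι : Type} (K : Set (ℝ × ℝ)) (x : ι → ℝ × ℝ) (k : ℕ) : Prop :=
  (∀ R : ℝ, {i : ι | ‖x i‖ ≤ R}.Finite) ∧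
  (∀ p : ℝ × ℝ, ∃ s : Finset ι, k ≤ s.card ∧ ∀ i ∈ s, p - x i ∈ K) ∧
  (∀ p : ℝ × ℝ, ∀ s : Finset ι, (∀ i ∈ s, p - x i ∈ interior K) → s.card ≤ k)

/-- `P` is a (two-dimensional) convex polygon whose vertex set is the finite set `V`:
`P` is the convex hull of `V`, every element of `V` is an extreme point of `P`
(so `V` is exactly the vertex set), and `P` has nonempty interior. -/
def IsConvexPolygon (P : Set (ℝ × ℝ)) (V : Finset (ℝ × ℝ)) : Prop :=
  P = convexHull ℝ (V : Set (ℝ × ℝ)) ∧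
  (∀ v ∈ V, v ∈ Set.extremePoints ℝ P) ∧
  (interior P).Nonempty

/-- `P` is symmetric about some point `c`. -/
def IsCentrallySymmetric (P : Set (ℝ × ℝ)) : Prop :=
  ∃ c : ℝ × ℝ, ∀ p ∈ P, 2 • c - p ∈ P

/-- The segment `[a, b]` is an edge of the convex polygon `P` with vertex set `V`. -/
def IsEdge (P : Set (ℝ × ℝ)) (V : Finset (ℝ × ℝ)) (a b : ℝ × ℝ) : Prop :=
  a ∈ V ∧ b ∈ V ∧ a ≠ b ∧ segment ℝ a b ⊆ frontier P

open Filter Topology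

/-!
Leave a point `v` in the direction of a short diagonal of the polygon, which is parallel to no side.
The tiles met at once are those with `v` in their interior (`φ` many) and those for which `v` lies
on certain consecutive sides; there are exactly `k` of them. Comparing these equations over all
short diagonals of a `2 * m`-gon shows that the number `κ` of tiles having `v` as one of two
opposite vertices does not depend on the pair, and that `2 * φ + (m - 1) * κ`, plus the number of
tiles having `v` inside a side, equals `2 * k`.

Let `v` be a vertex of some tile of a dodecagonal tiling with `k < 6`. If `v` is the start of a
side `r` of a tile, the end of that side is again a vertex, and the same count there bounds below
the counts at `v`, the more so if the step along side `r` keeps `v` interior to some tiles. This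
forces `φ = 2` and `κ = 1`, and exhibits three sides along which the step takes `v` out of the
interior of every tile. Opposite to two of them are the neighbours of the third, whereas an interior
point of a polygon with at least ten sides can always be moved by a given side, or by minus one of
its two neighbours, without leaving the interior. To see the latter, write the polygon as a zonotope
and use the linear relation between three consecutive sides.
-/

/-- The oriented area `a.1 * b.2 - a.2 * b.1` of the parallelogram spanned by two plane vectors. -/
noncomputable def wedge : ℝ × ℝ →ₗ[ℝ] ℝ × ℝ →ₗ[ℝ] ℝ :=
  LinearMap.mk₂ ℝ (fun a b => a.1 * b.2 - a.2 * b.1)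
    (fun a b c => by simp only [Prod.fst_add, Prod.snd_add]; ring)
    (fun t a b => by simp only [Prod.smul_fst, Prod.smul_snd, smul_eq_mul]; ring)
    (fun a b c => by simp only [Prod.fst_add, Prod.snd_add]; ring)
    (fun t a b => by simp only [Prod.smul_fst, Prod.smul_snd, smul_eq_mul]; ring)

lemma wedge_apply (a b : ℝ × ℝ) : wedge a b = a.1 * b.2 - a.2 * b.1 := rfl

lemma wedge_self (a : ℝ × ℝ) : wedge a a = 0 := by rw [wedge_apply]; ring

lemma wedge_swap (a b : ℝ × ℝ) : wedge a b = -wedge b a := by simp only [wedge_apply]; ring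

lemma wedge_plucker (a b c v : ℝ × ℝ) :
    wedge a c * wedge v b = wedge b c * wedge v a + wedge a b * wedge v c := by
  simp only [wedge_apply]; ring

lemma eq_wedge_div_smul_add {a b : ℝ × ℝ} (h : wedge a b ≠ 0) (u : ℝ × ℝ) :
    u = (wedge u b / wedge a b) • a + (wedge a u / wedge a b) • b := by
  ext <;> simp only [Prod.fst_add, Prod.snd_add, Prod.smul_fst, Prod.smul_snd, smul_eq_mul] <;>
    field_simp <;> simp only [wedge_apply] <;> ring

lemma wedge_ne_zero {a : ℝ × ℝ} (ha : a ≠ 0) : wedge a ≠ 0 := by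
  intro h
  have h1 := LinearMap.congr_fun h (0, 1)
  have h2 := LinearMap.congr_fun h (1, 0)
  simp only [wedge_apply, LinearMap.zero_apply] at h1 h2
  exact ha (Prod.ext (by simpa using h1) (by simpa using h2))

lemma sum_range_add_eq_of_periodic {M : Type*} [AddCommMonoid M] {f : ℤ → M} {m : ℕ}
    (hf : Function.Periodic f m) (j l : ℤ) :
    ∑ i ∈ Finset.range m, f (j + i) = ∑ i ∈ Finset.range m, f (l + i) := by
  have hper : Function.Periodic (fun j : ℤ => ∑ i ∈ Finset.range m, f (j + i)) 1 := by
    intro j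
    beta_reduce
    cases m with
    | zero => rfl
    | succ n =>
      rw [Finset.sum_range_succ, Finset.sum_range_succ', Nat.cast_zero, add_zero, ← hf j]
      push_cast
      simp only [add_comm, add_left_comm]
  have hconst (j : ℤ) := by simpa using hper.zsmul_eq j
  exact (hconst j).trans (hconst l).symm

lemma exists_antiperiodic_extension {E : Type*} [AddCommGroup E] {m : ℕ} (hm : 0 < m)
    (u : Fin m → E) : ∃ q : ℤ → E, Function.Antiperiodic q m ∧ ∀ i : Fin m, q (i : ℕ) = u i := by
  have hm' : (0 : ℤ) < m := by exact_mod_cast hm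
  refine ⟨fun n => (n / m).negOnePow • u ⟨(n % m).toNat, ?_⟩, fun n => ?_, fun i => ?_⟩
  · have := Int.emod_lt_of_pos n hm'
    have := Int.emod_nonneg n hm'.ne'
    omega
  · simp only [Int.add_emod_right, Int.add_ediv_of_dvd_right (dvd_refl (m : ℤ)),
      Int.ediv_self hm'.ne', Int.negOnePow_succ, Units.neg_smul]
  · have hi : ((i : ℕ) : ℤ) < m := by exact_mod_cast i.2
    have hdiv : ((i : ℕ) : ℤ) / m = 0 := Int.ediv_eq_zero_of_lt (by positivity) hi
    have hmod : ((i : ℕ) : ℤ) % m = (i : ℕ) := Int.emod_eq_of_lt (by positivity) hi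
    simp only [hdiv, hmod, Int.toNat_natCast, Int.negOnePow_zero, one_smul, Fin.eta]

/-- The side vectors of the polygon with vertices `q j`, indexed cyclically by `ℤ`. -/
def edge (q : ℤ → ℝ × ℝ) (j : ℤ) : ℝ × ℝ := q (j + 1) - q j

/-- `q` enumerates counterclockwise, with period `2 * m`, the vertices of a convex `2 * m`-gon
symmetric about the origin. Convexity is expressed by the directions of the sides: those of `m`
consecutive sides lie in an open half-plane and turn counterclockwise. -/
structure IsSymmVertexCycle (m : ℕ) (q : ℤ → ℝ × ℝ) : Prop where
  two_le : 2 ≤ m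
  antiperiodic : Function.Antiperiodic q m
  wedge_edge_pos : ∀ i j : ℤ, i < j → j < i + m → 0 < wedge (edge q i) (edge q j)

/-- The signed distance from `u` to the line through the side `j`, scaled by the length of the
side and positive on its left. -/
noncomputable def edgeGap (q : ℤ → ℝ × ℝ) (j : ℤ) (u : ℝ × ℝ) : ℝ := wedge (edge q j) (u - q j)

/-- The intersection of the closed half-planes to the left of all sides: the polygon itself. -/
def region (q : ℤ → ℝ × ℝ) : Set (ℝ × ℝ) := {u | ∀ j, 0 ≤ edgeGap q j u}

lemma edgeGap_add (q : ℤ → ℝ × ℝ) (j : ℤ) (u w : ℝ × ℝ) :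
    edgeGap q j (u + w) = edgeGap q j u + wedge (edge q j) w := by
  simp only [edgeGap, map_add, map_sub]; ring

lemma edgeGap_smul_add_smul (q : ℤ → ℝ × ℝ) (j : ℤ) (u v : ℝ × ℝ) (a b : ℝ) :
    edgeGap q j (a • u + b • v) =
      a * edgeGap q j u + b * edgeGap q j v + (1 - a - b) * edgeGap q j 0 := by
  simp only [edgeGap, map_add, map_sub, map_smul, smul_eq_mul, map_zero]
  ring

lemma convex_region (q : ℤ → ℝ × ℝ) : Convex ℝ (region q) := by
  intro u hu v hv a b ha hb hab j
  rw [edgeGap_smul_add_smul, show 1 - a - b = 0 by linarith, zero_mul, add_zero]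
  exact add_nonneg (mul_nonneg ha (hu j)) (mul_nonneg hb (hv j))

namespace IsSymmVertexCycle

variable {m : ℕ} {q : ℤ → ℝ × ℝ} (h : IsSymmVertexCycle m q)

include h

lemma edge_antiperiodic : Function.Antiperiodic (edge q) m := by
  intro j
  simp only [edge, add_right_comm j (m : ℤ) 1, h.antiperiodic _]
  abel

lemma edgeGap_periodic (u : ℝ × ℝ) : Function.Periodic (fun j => edgeGap q j u) (2 * m : ℤ) := by
  intro j
  simp only [edgeGap, h.edge_antiperiodic.periodic_two_mul j, h.antiperiodic.periodic_two_mul j]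

lemma abs_wedge_edge_periodic (l : ℤ) :
    Function.Periodic (fun j => |wedge (edge q l) (edge q j)|) m := by
  intro j
  simp only [h.edge_antiperiodic j, map_neg, abs_neg]

lemma vertex_eq_sum (l : ℤ) : q l = -(1 / 2 : ℝ) • ∑ i ∈ Finset.range m, edge q (l + i) := by
  have htel : ∑ i ∈ Finset.range m, edge q (l + i) = q (l + m) - q l := by
    have := Finset.sum_range_sub (fun i : ℕ => q (l + i)) m
    simpa [edge, add_assoc] using this
  rw [htel, h.antiperiodic l]
  module

/-- The coordinates `t` exhibit the polygon as the zonotope spanned by `m` consecutive sides. -/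
lemma edgeGap_sum_smul (t : ℕ → ℝ) (j l : ℤ) :
    edgeGap q l (∑ i ∈ Finset.range m, t i • edge q (j + i)) =
      ∑ i ∈ Finset.range m, (1 / 2 * |wedge (edge q l) (edge q (j + i))| +
        t i * wedge (edge q l) (edge q (j + i))) := by
  have habs : ∀ i ∈ Finset.range m,
      |wedge (edge q l) (edge q (l + i))| = wedge (edge q l) (edge q (l + i)) := by
    intro i hi
    rw [Finset.mem_range] at hi
    rcases i.eq_zero_or_pos with rfl | hi0
    · simp [wedge_self]
    · exact abs_of_pos (h.wedge_edge_pos l _ (by lia) (by lia))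
  have hq : wedge (edge q l) (q l) =
      -(1 / 2) * ∑ i ∈ Finset.range m, |wedge (edge q l) (edge q (j + i))| := by
    rw [sum_range_add_eq_of_periodic (h.abs_wedge_edge_periodic l) j l, Finset.sum_congr rfl habs]
    conv_lhs => rw [h.vertex_eq_sum l, map_smul, map_sum, smul_eq_mul]
  simp only [edgeGap, map_sub, hq, map_sum, map_smul, smul_eq_mul, Finset.sum_add_distrib,
    ← Finset.mul_sum]
  ring

end IsSymmVertexCycle

lemma half_abs_add_mul_nonneg {t : ℝ} (ht : |t| ≤ 1 / 2) (c : ℝ) : 0 ≤ 1 / 2 * |c| + t * c := by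
  have := mul_le_mul_of_nonneg_right ht (abs_nonneg c)
  linarith [neg_abs_le (t * c), abs_mul t c]

lemma half_abs_add_mul_pos {t c : ℝ} (ht : |t| < 1 / 2) (hc : c ≠ 0) :
    0 < 1 / 2 * |c| + t * c := by
  have := mul_lt_mul_of_pos_right ht (abs_pos.2 hc)
  linarith [neg_abs_le (t * c), abs_mul t c]

lemma edgeGap_self (q : ℤ → ℝ × ℝ) (j : ℤ) : edgeGap q j (q j) = 0 := by simp [edgeGap]

lemma edgeGap_succ_self (q : ℤ → ℝ × ℝ) (j : ℤ) : edgeGap q j (q (j + 1)) = 0 := wedge_self _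

namespace IsSymmVertexCycle

variable {m : ℕ} {q : ℤ → ℝ × ℝ} (h : IsSymmVertexCycle m q)

include h

lemma edge_ne_zero (j : ℤ) : edge q j ≠ 0 := by
  intro h0
  have := h.wedge_edge_pos j (j + 1) (by lia) (by have := h.two_le; lia)
  simp [h0] at this

lemma vertex_eq_sum_smul (j : ℤ) :
    q j = ∑ i ∈ Finset.range m, (-(1 / 2) : ℝ) • edge q (j + i) := by
  conv_lhs => rw [h.vertex_eq_sum j, Finset.smul_sum]

lemma edgeGap_vertex_pos {j l : ℤ} (hjl : j < l) (hlj : l < j + 2 * m - 1) :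
    0 < edgeGap q l (q j) := by
  have hm := h.two_le
  obtain ⟨n, hn⟩ : ∃ n : ℕ, (n : ℤ) = max 0 (l - m - j + 1) := ⟨_, Int.toNat_of_nonneg (by lia)⟩
  have hneg : wedge (edge q l) (edge q (j + n)) < 0 := by
    rw [wedge_swap, neg_lt_zero]
    exact h.wedge_edge_pos _ _ (by lia) (by lia)
  rw [h.vertex_eq_sum_smul j, h.edgeGap_sum_smul]
  refine Finset.sum_pos' (fun i _ => ?_) ⟨n, Finset.mem_range.2 (by lia), ?_⟩
  · linarith [le_abs_self (wedge (edge q l) (edge q (j + i)))]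
  · rw [abs_of_neg hneg]
    linarith

lemma wedge_edge_ne_zero_or {i j : ℤ} (hij : i < j) (hji : j < i + m) (l : ℤ) :
    wedge (edge q l) (edge q i) ≠ 0 ∨ wedge (edge q l) (edge q j) ≠ 0 := by
  by_contra! h0
  have hl := eq_wedge_div_smul_add (h.wedge_edge_pos i j hij hji).ne' (edge q l)
  rw [wedge_swap (edge q i) (edge q l), h0.1, h0.2] at hl
  exact h.edge_ne_zero l (by simpa using hl)

lemma region_eq_iInter :
    region q = ⋂ l ∈ Finset.Ico (0 : ℤ) (2 * m), {u | 0 ≤ edgeGap q l u} := by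
  ext u
  simp only [Set.mem_iInter, Finset.mem_Ico]
  refine ⟨fun hu l _ => hu l, fun hu l => ?_⟩
  obtain ⟨y, hy, hly⟩ := (h.edgeGap_periodic u).exists_mem_Ico₀ (by have := h.two_le; lia) l
  exact (hu y hy).trans_eq hly.symm

lemma interior_setOf_edgeGap_nonneg (l : ℤ) :
    interior {u | 0 ≤ edgeGap q l u} = {u | 0 < edgeGap q l u} := by
  have hopen : IsOpenMap (wedge (edge q l)) := LinearMap.isOpenMap_of_finiteDimensional _
    (LinearMap.surjective (wedge_ne_zero (h.edge_ne_zero l)))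
  have := hopen.preimage_interior_eq_interior_preimage
    (LinearMap.continuous_of_finiteDimensional _) (Set.Ici (wedge (edge q l) (q l)))
  rw [interior_Ici] at this
  simpa [Set.preimage, edgeGap] using this.symm

lemma interior_region_eq_iInter :
    interior (region q) = ⋂ l ∈ Finset.Ico (0 : ℤ) (2 * m), {u | 0 < edgeGap q l u} := by
  rw [h.region_eq_iInter, Finset.interior_iInter]
  simp only [h.interior_setOf_edgeGap_nonneg]

lemma mem_interior_region {u : ℝ × ℝ} :
    u ∈ interior (region q) ↔ ∀ l, 0 < edgeGap q l u := by
  rw [h.interior_region_eq_iInter]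
  simp only [Set.mem_iInter, Finset.mem_Ico]
  refine ⟨fun hu l => ?_, fun hu l _ => hu l⟩
  obtain ⟨y, hy, hly⟩ := (h.edgeGap_periodic u).exists_mem_Ico₀ (by have := h.two_le; lia) l
  exact (hu y hy).trans_eq hly.symm

lemma sum_smul_edge_mem_region {t : ℕ → ℝ} (ht : ∀ i < m, |t i| ≤ 1 / 2) (j : ℤ) :
    ∑ i ∈ Finset.range m, t i • edge q (j + i) ∈ region q := by
  intro l
  rw [h.edgeGap_sum_smul]
  exact Finset.sum_nonneg fun i hi => half_abs_add_mul_nonneg (ht i (Finset.mem_range.1 hi)) _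

lemma vertex_mem_region (j : ℤ) : q j ∈ region q := by
  rw [h.vertex_eq_sum_smul j]
  exact h.sum_smul_edge_mem_region (t := fun _ => -(1 / 2)) (fun _ _ => by norm_num) j

lemma sum_smul_edge_mem_interior {t : ℕ → ℝ} (ht : ∀ i < m, |t i| ≤ 1 / 2) {a b : ℕ} (hab : a < b)
    (hb : b < m) (hta : |t a| < 1 / 2) (htb : |t b| < 1 / 2) (j : ℤ) :
    ∑ i ∈ Finset.range m, t i • edge q (j + i) ∈ interior (region q) := by
  refine h.mem_interior_region.2 fun l => ?_
  rw [h.edgeGap_sum_smul]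
  refine Finset.sum_pos'
    (fun i hi => half_abs_add_mul_nonneg (ht i (Finset.mem_range.1 hi)) _) ?_
  rcases h.wedge_edge_ne_zero_or (i := j + a) (j := j + b) (by lia) (by lia) l with hne | hne
  · exact ⟨a, Finset.mem_range.2 (by lia), half_abs_add_mul_pos hta hne⟩
  · exact ⟨b, Finset.mem_range.2 hb, half_abs_add_mul_pos htb hne⟩

end IsSymmVertexCycle

lemma exists_nonneg_and_succ_nonpos_of_antiperiodic {f : ℤ → ℝ} {m : ℕ}
    (hf : Function.Antiperiodic f m) (hm : m ≠ 0) : ∃ j, 0 ≤ f j ∧ f (j + 1) ≤ 0 := by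
  by_contra! hpos
  obtain ⟨j, hj⟩ : ∃ j, 0 ≤ f j := by
    rcases le_total 0 (f 0) with h0 | h0
    · exact ⟨0, h0⟩
    · exact ⟨0 + m, by rw [hf]; linarith⟩
  have hsucc (n : ℕ) : 0 < f (j + n + 1) := by
    induction n with
    | zero => simpa using hpos j hj
    | succ n ih => simpa [add_assoc] using hpos _ ih.le
  have hm' := hsucc (m - 1)
  rw [show j + ((m - 1 : ℕ) : ℤ) + 1 = j + m by lia, hf] at hm'
  linarith

lemma smul_add_smul_mem_of_convex {E : Type*} [AddCommGroup E] [Module ℝ E] {s : Set E}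
    (hs : Convex ℝ s) (h0 : 0 ∈ s) {u v : E} (hu : u ∈ s) (hv : v ∈ s) {a b : ℝ} (ha : 0 ≤ a)
    (hb : 0 ≤ b) (hab : a + b ≤ 1) : a • u + b • v ∈ s := by
  have := hs.sum_mem (t := Finset.univ) (w := ![1 - a - b, a, b]) (z := ![0, u, v])
    (by simpa [Fin.forall_fin_succ, ha, hb] using by linarith)
    (by simp [Fin.sum_univ_three]; ring) (by simpa [Fin.forall_fin_succ, hu, hv] using h0)
  simpa [Fin.sum_univ_three] using this

namespace IsSymmVertexCycle

variable {m : ℕ} {q : ℤ → ℝ × ℝ} (h : IsSymmVertexCycle m q)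

include h

lemma zero_mem_interior : (0 : ℝ × ℝ) ∈ interior (region q) := by
  have := h.two_le
  simpa using h.sum_smul_edge_mem_interior (t := 0) (a := 0) (b := 1) (by simp) (by lia) (by lia)
    (by simp) (by simp) 0

lemma edgeGap_zero_pos (j : ℤ) : 0 < edgeGap q j 0 := h.mem_interior_region.1 h.zero_mem_interior j

lemma exists_eq_smul_vertex_add_smul_vertex (u : ℝ × ℝ) :
    ∃ j, ∃ a b : ℝ, 0 ≤ a ∧ 0 ≤ b ∧ u = a • q j + b • q (j + 1) := by
  have hf : Function.Antiperiodic (fun j => wedge (q j) u) m := fun j => by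
    simp [h.antiperiodic j]
  obtain ⟨j, hj, hj'⟩ := exists_nonneg_and_succ_nonpos_of_antiperiodic hf (by have := h.two_le; lia)
  have hpos : 0 < wedge (q j) (q (j + 1)) := by
    convert h.edgeGap_zero_pos j using 1
    simp only [edgeGap, edge, wedge_apply, Prod.fst_sub, Prod.snd_sub, zero_sub, Prod.fst_neg,
      Prod.snd_neg]
    ring
  refine ⟨j, _, _, div_nonneg ?_ hpos.le, div_nonneg hj hpos.le,
    eq_wedge_div_smul_add hpos.ne' u⟩
  rw [wedge_swap]
  exact neg_nonneg.2 hj'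

lemma exists_eq_smul_vertex_add_smul_vertex_of_mem {u : ℝ × ℝ} (hu : u ∈ region q) :
    ∃ j, ∃ a b : ℝ, 0 ≤ a ∧ 0 ≤ b ∧ a + b ≤ 1 ∧ u = a • q j + b • q (j + 1) := by
  obtain ⟨j, a, b, ha, hb, rfl⟩ := h.exists_eq_smul_vertex_add_smul_vertex u
  refine ⟨j, a, b, ha, hb, ?_, rfl⟩
  have hgap := hu j
  rw [edgeGap_smul_add_smul, edgeGap_self, edgeGap_succ_self, mul_zero, mul_zero, zero_add,
    zero_add] at hgap
  linarith [nonneg_of_mul_nonneg_left hgap (h.edgeGap_zero_pos j)]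

lemma region_eq_convexHull : region q = convexHull ℝ (Set.range q) := by
  refine subset_antisymm (fun u hu => ?_)
    (convexHull_min (Set.range_subset_iff.2 h.vertex_mem_region) (convex_region q))
  have hq (j : ℤ) : q j ∈ convexHull ℝ (Set.range q) := subset_convexHull ℝ _ ⟨j, rfl⟩
  have h0 : (0 : ℝ × ℝ) ∈ convexHull ℝ (Set.range q) := by
    convert convex_convexHull ℝ (Set.range q) (hq 0) (hq (0 + m)) (a := 1 / 2) (b := 1 / 2)
      (by norm_num) (by norm_num) (by norm_num)
    rw [h.antiperiodic 0]
    module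
  obtain ⟨j, a, b, ha, hb, hab, rfl⟩ := h.exists_eq_smul_vertex_add_smul_vertex_of_mem hu
  exact smul_add_smul_mem_of_convex (convex_convexHull ℝ _) h0 (hq j) (hq _) ha hb hab

lemma isBounded_region : Bornology.IsBounded (region q) := by
  rw [h.region_eq_convexHull, isBounded_convexHull]
  refine (((Set.finite_Ico (0 : ℤ) (2 * m)).image q).subset ?_).isBounded
  rintro _ ⟨j, rfl⟩
  obtain ⟨i, hi, hij⟩ :=
    h.antiperiodic.periodic_two_mul.exists_mem_Ico₀ (by have := h.two_le; lia) j
  exact ⟨i, hi, hij.symm⟩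

lemma exists_vertex_eq_sum_smul (n j : ℤ) : ∃ t : ℕ → ℝ, (∀ i, |t i| ≤ 1 / 2) ∧
    q n = ∑ i ∈ Finset.range m, t i • edge q (j + i) := by
  have hm := h.two_le
  obtain ⟨s, hs, hs'⟩ :=
    exists_antiperiodic_extension (by lia : 0 < m) (fun _ => -(1 / 2) : Fin m → ℝ)
  have habs (l : ℤ) : |s l| ≤ 1 / 2 := by
    have hper : Function.Periodic (fun l => |s l|) (m : ℤ) := fun l => by simp [hs l]
    obtain ⟨i, hi, hil⟩ := hper.exists_mem_Ico₀ (by lia) l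
    lift i to ℕ using hi.1
    have := hs' ⟨i, by simpa using hi.2⟩
    simp only at hil this
    simp [hil, this]
  have hper : Function.Periodic (fun l => s (l - n) • edge q l) (m : ℤ) := fun l => by
    simp only [add_sub_right_comm l (m : ℤ) n, hs _, h.edge_antiperiodic l, neg_smul_neg]
  refine ⟨fun i => s (j + i - n), fun i => habs _, ?_⟩
  rw [sum_range_add_eq_of_periodic hper j n, h.vertex_eq_sum_smul n]
  refine Finset.sum_congr rfl fun i hi => ?_
  rw [add_sub_cancel_left, hs' ⟨i, Finset.mem_range.1 hi⟩]

lemma exists_eq_sum_smul_of_mem_region {u : ℝ × ℝ} (hu : u ∈ region q) (j : ℤ) :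
    ∃ t : ℕ → ℝ, (∀ i, |t i| ≤ 1 / 2) ∧ u = ∑ i ∈ Finset.range m, t i • edge q (j + i) := by
  have hconv : Convex ℝ {u | ∃ t : ℕ → ℝ, (∀ i, |t i| ≤ 1 / 2) ∧
      u = ∑ i ∈ Finset.range m, t i • edge q (j + i)} := by
    rintro _ ⟨t, ht, rfl⟩ _ ⟨s, hs, rfl⟩ a b ha hb hab
    refine ⟨fun i => a * t i + b * s i, fun i => ?_, ?_⟩
    · have := convex_Icc (-(1 / 2) : ℝ) (1 / 2) (abs_le.1 (ht i)) (abs_le.1 (hs i)) ha hb hab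
      exact abs_le.2 this
    · simp only [Finset.smul_sum, add_smul, mul_smul, Finset.sum_add_distrib]
  rw [h.region_eq_convexHull] at hu
  refine convexHull_min ?_ hconv hu
  rintro _ ⟨n, rfl⟩
  exact h.exists_vertex_eq_sum_smul n j

lemma exists_eq_sum_smul_of_mem_interior {u : ℝ × ℝ} (hu : u ∈ interior (region q)) (j : ℤ) :
    ∃ t : ℕ → ℝ, (∀ i, |t i| < 1 / 2) ∧ u = ∑ i ∈ Finset.range m, t i • edge q (j + i) := by
  obtain ⟨r, hr, hru⟩ : ∃ r : ℝ, 1 < r ∧ r • u ∈ interior (region q) := by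
    have hnhds : ∀ᶠ r : ℝ in nhds 1, r • u ∈ interior (region q) :=
      (continuous_id.smul continuous_const).continuousAt.eventually
        (isOpen_interior.eventually_mem (by simpa using hu))
    exact ((eventually_mem_nhdsWithin (s := Set.Ioi (1 : ℝ))).and
      (hnhds.filter_mono nhdsWithin_le_nhds)).exists
  obtain ⟨t, ht, htu⟩ := h.exists_eq_sum_smul_of_mem_region (interior_subset hru) j
  have hr0 : 0 < r := one_pos.trans hr
  refine ⟨fun i => r⁻¹ * t i, fun i => ?_, ?_⟩
  · rw [abs_mul, abs_of_pos (inv_pos.2 hr0), inv_mul_lt_iff₀ hr0]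
    linarith [ht i]
  · simp only [mul_smul, ← Finset.smul_sum, ← htu, inv_smul_smul₀ hr0.ne']

end IsSymmVertexCycle

lemma sum_range_smul_add_ite {E : Type*} [AddCommGroup E] [Module ℝ E] {m a b c : ℕ} (ha : a < m)
    (hb : b < m) (hc : c < m) (t : ℕ → ℝ) (v : ℕ → E) (α β γ : ℝ) :
    ∑ i ∈ Finset.range m, (t i + (if i = a then α else 0) + (if i = b then β else 0) +
        (if i = c then γ else 0)) • v i =
      ∑ i ∈ Finset.range m, t i • v i + (α • v a + β • v b + γ • v c) := by
  simp [add_smul, ite_smul, Finset.sum_add_distrib, ha, hb, hc, add_assoc]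

/-- Slide along `edge q (j + 1) = a • edge q j + b • edge q (j + 2)` until a zonotope coordinate
reaches its bound; the side whose coordinate did so can then be crossed. -/
lemma exists_slide {a b t₀ t₁ t₂ : ℝ} (ha : 0 < a) (hb : 0 < b) (h₀ : |t₀| < 1 / 2)
    (h₁ : |t₁| < 1 / 2) (h₂ : |t₂| < 1 / 2) :
    ∃ s, (|t₀ + s * a| ≤ 1 / 2 ∧ |t₁ + (1 - s)| ≤ 1 / 2 ∧ |t₂ + s * b| ≤ 1 / 2) ∨
      (|t₀ + (s * a - 1)| ≤ 1 / 2 ∧ |t₁ + -s| ≤ 1 / 2 ∧ |t₂ + s * b| ≤ 1 / 2) ∨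
      (|t₀ + s * a| ≤ 1 / 2 ∧ |t₁ + -s| ≤ 1 / 2 ∧ |t₂ + (s * b - 1)| ≤ 1 / 2) := by
  rw [abs_lt] at h₀ h₁ h₂
  simp only [abs_le]
  have hs₁ : 0 < t₁ + 1 / 2 := by linarith
  have hs₀ : 0 < (1 / 2 - t₀) / a := div_pos (by linarith) ha
  have hs₂ : 0 < (1 / 2 - t₂) / b := div_pos (by linarith) hb
  obtain ⟨s, hs, hs₀', hs₁', hs₂', hmin⟩ : ∃ s, 0 < s ∧ s ≤ (1 / 2 - t₀) / a ∧ s ≤ t₁ + 1 / 2 ∧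
      s ≤ (1 / 2 - t₂) / b ∧
      (s = t₁ + 1 / 2 ∨ s = (1 / 2 - t₀) / a ∨ s = (1 / 2 - t₂) / b) := by
    refine ⟨min (t₁ + 1 / 2) (min ((1 / 2 - t₀) / a) ((1 / 2 - t₂) / b)), by positivity,
      by simp, by simp, by simp, ?_⟩
    grind
  have := mul_pos hs ha
  have := mul_pos hs hb
  rw [le_div_iff₀ ha] at hs₀'
  rw [le_div_iff₀ hb] at hs₂'
  rw [eq_div_iff ha.ne', eq_div_iff hb.ne'] at hmin
  refine ⟨s, ?_⟩
  rcases hmin with hmin | hmin | hmin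
  · exact .inl ⟨⟨by linarith, by linarith⟩, ⟨by linarith, by linarith⟩, by linarith, by linarith⟩
  · exact .inr (.inl ⟨⟨by linarith, by linarith⟩, ⟨by linarith, by linarith⟩, by linarith,
      by linarith⟩)
  · exact .inr (.inr ⟨⟨by linarith, by linarith⟩, ⟨by linarith, by linarith⟩, by linarith,
      by linarith⟩)

/-- The side from `q j` to `q (j + 1)` without its endpoints. -/
def openEdge (q : ℤ → ℝ × ℝ) (j : ℤ) : Set (ℝ × ℝ) := openSegment ℝ (q j) (q (j + 1))

lemma edgeGap_of_mem_openEdge {q : ℤ → ℝ × ℝ} {u : ℝ × ℝ} {j : ℤ} (hu : u ∈ openEdge q j)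
    (l : ℤ) : ∃ a b : ℝ, 0 < a ∧ 0 < b ∧
      edgeGap q l u = a * edgeGap q l (q j) + b * edgeGap q l (q (j + 1)) := by
  obtain ⟨a, b, ha, hb, hab, rfl⟩ := hu
  refine ⟨a, b, ha, hb, ?_⟩
  rw [edgeGap_smul_add_smul, show 1 - a - b = 0 by linarith, zero_mul, add_zero]

lemma edgeGap_eq_zero_of_mem_openEdge {q : ℤ → ℝ × ℝ} {u : ℝ × ℝ} {j : ℤ}
    (hu : u ∈ openEdge q j) : edgeGap q j u = 0 := by
  obtain ⟨a, b, -, -, hgap⟩ := edgeGap_of_mem_openEdge hu j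
  rw [hgap, edgeGap_self, edgeGap_succ_self, mul_zero, mul_zero, add_zero]

namespace IsSymmVertexCycle

variable {m : ℕ} {q : ℤ → ℝ × ℝ} (h : IsSymmVertexCycle m q)

include h

lemma mem_interior_or_vertex_or_openEdge {u : ℝ × ℝ} (hu : u ∈ region q) :
    u ∈ interior (region q) ∨ ∃ j, u = q j ∨ u ∈ openEdge q j := by
  obtain ⟨j, a, b, ha, hb, hab, rfl⟩ := h.exists_eq_smul_vertex_add_smul_vertex_of_mem hu
  rcases hab.lt_or_eq with hlt | hab
  · refine .inl (h.mem_interior_region.2 fun l => ?_)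
    rw [edgeGap_smul_add_smul]
    exact add_pos_of_nonneg_of_pos (add_nonneg (mul_nonneg ha (h.vertex_mem_region _ _))
      (mul_nonneg hb (h.vertex_mem_region _ _))) (mul_pos (by linarith) (h.edgeGap_zero_pos l))
  have hseg : a • q j + b • q (j + 1) ∈ segment ℝ (q j) (q (j + 1)) := ⟨a, b, ha, hb, hab, rfl⟩
  rw [← insert_endpoints_openSegment] at hseg
  rcases hseg with heq | heq | hmem
  · exact .inr ⟨j, .inl heq⟩
  · exact .inr ⟨j + 1, .inl heq⟩
  · exact .inr ⟨j, .inr hmem⟩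

lemma edgeGap_pos_of_mem_openEdge {u : ℝ × ℝ} {j l : ℤ}
    (hu : u ∈ openEdge q j) (hjl : j < l) (hlj : l < j + 2 * m) :
    0 < edgeGap q l u := by
  have hm := h.two_le
  obtain ⟨a, b, ha, hb, hgap⟩ := edgeGap_of_mem_openEdge hu l
  rw [hgap]
  rcases eq_or_ne l (j + 1) with rfl | hne
  · exact add_pos_of_pos_of_nonneg (mul_pos ha (h.edgeGap_vertex_pos hjl (by lia)))
      (mul_nonneg hb.le (h.vertex_mem_region _ _))
  · exact add_pos_of_nonneg_of_pos (mul_nonneg ha.le (h.vertex_mem_region _ _))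
      (mul_pos hb (h.edgeGap_vertex_pos (by lia) (by lia)))

lemma exists_edge_eq_smul_add_smul {i j k : ℤ} (hij : i < j) (hjk : j < k) (hki : k < i + m) :
    ∃ a b : ℝ, 0 < a ∧ 0 < b ∧ edge q j = a • edge q i + b • edge q k := by
  have hik := h.wedge_edge_pos i k (hij.trans hjk) hki
  exact ⟨_, _, div_pos (h.wedge_edge_pos j k hjk (by lia)) hik,
    div_pos (h.wedge_edge_pos i j hij (by lia)) hik, eq_wedge_div_smul_add hik.ne' _⟩

lemma vertex_add_edge_mem_interior {j r : ℤ} (hjr : j < r) (hrj : r < j + m - 1) :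
    q j + edge q r ∈ interior (region q) := by
  obtain ⟨n, rfl⟩ : ∃ n : ℕ, r = j + n := ⟨(r - j).toNat, by lia⟩
  obtain ⟨a, b, ha, hb, hr⟩ := h.exists_edge_eq_smul_add_smul (k := j + (m - 1 : ℕ)) hjr
    (by lia) (by lia)
  -- Trading a bit of `edge q r` against the two outer sides makes all three coordinates strict.
  set s := (1 + a + b)⁻¹ with hs
  have hs0 : 0 < s := by positivity
  have hsum : s + s * a + s * b = 1 := by rw [hs]; field_simp
  have key : q j + edge q (j + n) =
      ∑ i ∈ Finset.range m, (-(1 / 2) + (if i = 0 then s * a else 0) +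
        (if i = n then 1 - s else 0) + (if i = m - 1 then s * b else 0)) • edge q (j + i) := by
    rw [sum_range_smul_add_ite (by lia) (by lia) (by lia), ← h.vertex_eq_sum_smul,
      Nat.cast_zero, add_zero]
    conv_lhs => rw [show edge q (j + n) = s • edge q (j + n) + (1 - s) • edge q (j + n) by module]
    nth_rw 1 [hr]
    module
  have hsa := mul_pos hs0 ha
  have hsb := mul_pos hs0 hb
  rw [key]
  have hn : n ≠ 0 := by lia
  have hnm : n ≠ m - 1 := by lia
  have hm0 : 0 ≠ m - 1 := by lia
  refine h.sum_smul_edge_mem_interior (fun i _ => abs_le.2 ?_) (a := 0) (b := n) (by lia)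
    (by lia) (abs_lt.2 ?_) (abs_lt.2 ?_) j
  · constructor <;> split_ifs <;> first | lia | linarith
  · constructor <;> simp only [hn.symm, hm0, if_true, if_false] <;> linarith
  · constructor <;> simp only [hn, hnm, if_true, if_false] <;> linarith

lemma add_edge_mem_interior_of_mem_openEdge (hm : 3 ≤ m) {u : ℝ × ℝ} {j r : ℤ}
    (hu : u ∈ openEdge q j) (hjr : j < r) (hrj : r < j + m) :
    u + edge q r ∈ interior (region q) := by
  have hmem : u + edge q r ∈ openSegment ℝ (q j + edge q r) (q (j + 1) + edge q r) := by
    simpa only [add_comm _ (edge q r)] using (mem_openSegment_translate ℝ (edge q r)).2 hu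
  by_cases hr : r = j + m - 1
  · refine (convex_region q).openSegment_self_interior_subset_interior ?_
      (h.vertex_add_edge_mem_interior (by lia) (by lia)) hmem
    have hq : q j + edge q r = q (j - 1) := by
      rw [hr, add_sub_right_comm, h.edge_antiperiodic, edge, sub_add_cancel]
      abel
    exact hq ▸ h.vertex_mem_region _
  · refine (convex_region q).openSegment_interior_self_subset_interior
      (h.vertex_add_edge_mem_interior hjr (by lia)) ?_ hmem
    rcases eq_or_ne r (j + 1) with rfl | hne
    · rw [edge, add_sub_cancel]
      exact h.vertex_mem_region _
    · exact interior_subset (h.vertex_add_edge_mem_interior (by lia) (by lia))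

lemma sum_smul_add_mem_interior (hm : 5 ≤ m) {t : ℕ → ℝ} (ht : ∀ i, |t i| < 1 / 2) {α β γ : ℝ}
    (hα : |t 0 + α| ≤ 1 / 2) (hβ : |t 1 + β| ≤ 1 / 2) (hγ : |t 2 + γ| ≤ 1 / 2) (j : ℤ) :
    ∑ i ∈ Finset.range m, t i • edge q (j + i) +
      (α • edge q j + β • edge q (j + 1) + γ • edge q (j + 2)) ∈ interior (region q) := by
  have hsum := sum_range_smul_add_ite (by lia : 0 < m) (by lia : 1 < m) (by lia : 2 < m) t
    (fun i : ℕ => edge q (j + i)) α β γ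
  simp only [Nat.cast_zero, add_zero, Nat.cast_one, Nat.cast_ofNat] at hsum
  rw [← hsum]
  refine h.sum_smul_edge_mem_interior (fun i _ => ?_) (a := 3) (b := 4) (by lia) (by lia)
    (by simpa using ht 3) (by simpa using ht 4) j
  match i with
  | 0 => simpa using hα
  | 1 => simpa using hβ
  | 2 => simpa using hγ
  | i + 3 => simpa using (ht (i + 3)).le

lemma add_edge_mem_interior_or (hm : 5 ≤ m) {u : ℝ × ℝ} (hu : u ∈ interior (region q)) (j : ℤ) :
    u + edge q (j + 1) ∈ interior (region q) ∨ u - edge q j ∈ interior (region q) ∨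
      u - edge q (j + 2) ∈ interior (region q) := by
  obtain ⟨t, ht, rfl⟩ := h.exists_eq_sum_smul_of_mem_interior hu j
  obtain ⟨a, b, ha, hb, hab⟩ := h.exists_edge_eq_smul_add_smul (i := j) (j := j + 1) (k := j + 2)
    (by lia) (by lia) (by lia)
  obtain ⟨s, hs | hs | hs⟩ := exists_slide ha hb (ht 0) (ht 1) (ht 2)
  · refine .inl ?_
    convert h.sum_smul_add_mem_interior hm ht hs.1 hs.2.1 hs.2.2 j using 2
    rw [hab]
    module
  · refine .inr (.inl ?_)
    convert h.sum_smul_add_mem_interior hm ht hs.1 hs.2.1 hs.2.2 j using 1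
    rw [hab]
    module
  · refine .inr (.inr ?_)
    convert h.sum_smul_add_mem_interior hm ht hs.1 hs.2.1 hs.2.2 j using 1
    rw [hab]
    module

end IsSymmVertexCycle

/-- The short ray that leaves `u` in direction `w` enters the interior of `K`. -/
def PointsInto (K : Set (ℝ × ℝ)) (w u : ℝ × ℝ) : Prop :=
  ∀ᶠ ε in 𝓝[>] (0 : ℝ), u + ε • w ∈ interior K

lemma eventually_add_mul_pos {g c : ℝ} (h : 0 < g ∨ g = 0 ∧ 0 < c) :
    ∀ᶠ ε in 𝓝[>] (0 : ℝ), 0 < g + ε * c := by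
  rcases h with hg | ⟨rfl, hc⟩
  · have hcont : ContinuousAt (fun ε : ℝ => g + ε * c) 0 := by fun_prop
    exact (hcont.eventually_const_lt (by simpa using hg)).filter_mono nhdsWithin_le_nhds
  · filter_upwards [eventually_mem_nhdsWithin] with ε hε
    simpa using mul_pos hε hc

/-- The direction of the diagonal from `q r` to `q (r + 2)`. As it lies strictly between the
directions of two consecutive sides, it is parallel to no side. -/
def shortDiagonal (q : ℤ → ℝ × ℝ) (r : ℤ) : ℝ × ℝ := edge q r + edge q (r + 1)

lemma eventually_notMem_region {q : ℤ → ℝ × ℝ} {u w : ℝ × ℝ}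
    (hu : ∃ l, edgeGap q l u < 0 ∨ edgeGap q l u = 0 ∧ wedge (edge q l) w < 0) :
    ∀ᶠ ε in 𝓝[>] (0 : ℝ), u + ε • w ∉ region q := by
  obtain ⟨l, hl⟩ := hu
  have hneg := eventually_add_mul_pos (g := -edgeGap q l u) (c := -wedge (edge q l) w)
    (by simpa using hl)
  filter_upwards [hneg] with ε hε hmem
  have := hmem l
  rw [edgeGap_add, map_smul, smul_eq_mul] at this
  linarith

namespace IsSymmVertexCycle

variable {m : ℕ} {q : ℤ → ℝ × ℝ} (h : IsSymmVertexCycle m q)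

include h

lemma wedge_shortDiagonal_pos {l r : ℤ} (hlr : l ≤ r) (hrl : r < l + m) :
    0 < wedge (edge q l) (shortDiagonal q r) := by
  rw [shortDiagonal, map_add]
  rcases hlr.eq_or_lt with rfl | hlr
  · rw [wedge_self, zero_add]
    exact h.wedge_edge_pos _ _ (by lia) (by have := h.two_le; lia)
  · refine add_pos_of_pos_of_nonneg (h.wedge_edge_pos l r hlr hrl) ?_
    rcases (show r + 1 ≤ l + m by lia).eq_or_lt with heq | hlt
    · rw [heq, h.edge_antiperiodic, map_neg, wedge_self, neg_zero]
    · exact (h.wedge_edge_pos _ _ (by lia) hlt).le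

lemma wedge_shortDiagonal_neg {l r : ℤ} (hlr : l + m ≤ r) (hrl : r < l + 2 * m) :
    wedge (edge q l) (shortDiagonal q r) < 0 := by
  have := h.wedge_shortDiagonal_pos (l := l + m) hlr (by lia)
  rw [h.edge_antiperiodic, map_neg, LinearMap.neg_apply] at this
  linarith

lemma wedge_shortDiagonal_ne_zero (l r : ℤ) : wedge (edge q l) (shortDiagonal q r) ≠ 0 := by
  have hper : Function.Periodic (fun l => wedge (edge q l) (shortDiagonal q r)) (2 * m : ℤ) :=
    fun l => by simp only [h.edge_antiperiodic.periodic_two_mul l]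
  obtain ⟨i, ⟨hri, hir⟩, hl⟩ := hper.exists_mem_Ioc (by have := h.two_le; lia) l (r - 2 * m)
  rw [hl]
  by_cases hi : i + m ≤ r
  · exact (h.wedge_shortDiagonal_neg hi (by lia)).ne
  · exact (h.wedge_shortDiagonal_pos (by lia) (by lia)).ne'

lemma pointsInto_region {u w : ℝ × ℝ} (a : ℤ) (hu : ∀ l ∈ Set.Ico a (a + 2 * m),
    0 < edgeGap q l u ∨ edgeGap q l u = 0 ∧ 0 < wedge (edge q l) w) :
    PointsInto (region q) w u := by
  have hper : Function.Periodic (fun l => (edgeGap q l u, wedge (edge q l) w)) (2 * m : ℤ) :=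
    fun l => Prod.ext (h.edgeGap_periodic u l) (by
      simp only [h.edge_antiperiodic.periodic_two_mul l])
  have hall (l : ℤ) : 0 < edgeGap q l u ∨ edgeGap q l u = 0 ∧ 0 < wedge (edge q l) w := by
    obtain ⟨i, hi, hil⟩ := hper.exists_mem_Ico (by have := h.two_le; lia) l a
    simp only [Prod.mk.injEq] at hil
    simpa only [hil.1, hil.2] using hu i hi
  have hev : ∀ᶠ ε in 𝓝[>] (0 : ℝ), ∀ l ∈ Finset.Ico (0 : ℤ) (2 * m),
      0 < edgeGap q l u + ε * wedge (edge q l) w :=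
    (eventually_all_finset _).2 fun l _ => eventually_add_mul_pos (hall l)
  filter_upwards [hev] with ε hε
  rw [h.interior_region_eq_iInter]
  simpa only [Set.mem_iInter, Set.mem_ofPred_eq, edgeGap_add, map_smul, smul_eq_mul] using hε

lemma pointsInto_shortDiagonal_or_eventually_notMem (u : ℝ × ℝ) (r : ℤ) :
    PointsInto (region q) (shortDiagonal q r) u ∨
      ∀ᶠ ε in 𝓝[>] (0 : ℝ), u + ε • shortDiagonal q r ∉ region q := by
  by_cases hu : ∀ l, 0 < edgeGap q l u ∨
      edgeGap q l u = 0 ∧ 0 < wedge (edge q l) (shortDiagonal q r)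
  · exact .inl (h.pointsInto_region 0 fun l _ => hu l)
  · push Not at hu
    obtain ⟨l, hgap, hw⟩ := hu
    refine .inr (eventually_notMem_region ⟨l, hgap.lt_or_eq.imp id fun h0 => ⟨h0, ?_⟩⟩)
    exact (hw h0).lt_of_ne (h.wedge_shortDiagonal_ne_zero l r)

omit h in
lemma edgeGap_nonneg_of_pointsInto {u w : ℝ × ℝ} (hu : PointsInto (region q) w u) {l : ℤ} :
    0 < edgeGap q l u ∨ edgeGap q l u = 0 ∧ 0 ≤ wedge (edge q l) w := by
  by_contra! hneg
  have hev := eventually_notMem_region (u := u) (w := w)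
    ⟨l, hneg.1.lt_or_eq.imp id fun h0 => ⟨h0, hneg.2 h0⟩⟩
  obtain ⟨ε, hε, hε'⟩ := (hu.and hev).exists
  exact hε' (interior_subset hε)

lemma pointsInto_of_mem_interior {u : ℝ × ℝ} (hu : u ∈ interior (region q)) (w : ℝ × ℝ) :
    PointsInto (region q) w u :=
  h.pointsInto_region 0 fun l _ => .inl (h.mem_interior_region.1 hu l)

lemma pointsInto_shortDiagonal_vertex {j r : ℤ} (hrj : r < j + m - 1) (hjr : j ≤ r) :
    PointsInto (region q) (shortDiagonal q r) (q j) := by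
  refine h.pointsInto_region (j - 1) fun l ⟨hjl, hlj⟩ => ?_
  rcases (show l = j - 1 ∨ l = j ∨ j < l by lia) with rfl | rfl | hlt
  · refine .inr ⟨?_, h.wedge_shortDiagonal_pos (by lia) (by lia)⟩
    simpa using edgeGap_succ_self q (j - 1)
  · exact .inr ⟨edgeGap_self q l, h.wedge_shortDiagonal_pos hjr (by lia)⟩
  · exact .inl (h.edgeGap_vertex_pos hlt (by lia))

lemma pointsInto_shortDiagonal_openEdge {u : ℝ × ℝ} {j r : ℤ} (hu : u ∈ openEdge q j)
    (hrj : r < j + m) (hjr : j ≤ r) : PointsInto (region q) (shortDiagonal q r) u := by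
  refine h.pointsInto_region j fun l ⟨hjl, hlj⟩ => ?_
  rcases hjl.eq_or_lt with rfl | hlt
  · exact .inr ⟨edgeGap_eq_zero_of_mem_openEdge hu, h.wedge_shortDiagonal_pos hjr hrj⟩
  · exact .inl (h.edgeGap_pos_of_mem_openEdge hu hlt hlj)

lemma lt_add_of_pointsInto {u : ℝ × ℝ} {j r : ℤ} (hu : PointsInto (region q) (shortDiagonal q r) u)
    (hgap : edgeGap q j u = 0) (hrj : r < j + 2 * m) : r < j + m := by
  by_contra! hlt
  have hneg := h.wedge_shortDiagonal_neg hlt hrj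
  rcases edgeGap_nonneg_of_pointsInto hu (l := j) with hpos | ⟨-, hnonneg⟩
  · exact hpos.ne' hgap
  · exact hneg.not_ge hnonneg

lemma setOf_pointsInto_shortDiagonal (r : ℤ) :
    {u | PointsInto (region q) (shortDiagonal q r) u} =
      interior (region q) ∪ ((⋃ i ∈ Finset.range (m - 1), {q (r - i)}) ∪
        ⋃ i ∈ Finset.range m, openEdge q (r - i)) := by
  have hm := h.two_le
  ext u
  simp only [Set.mem_ofPred_eq, Set.mem_union, Set.mem_iUnion, Finset.mem_range,
    Set.mem_singleton_iff, exists_prop]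
  constructor
  · intro hu
    have hreg : u ∈ region q := fun l =>
      (edgeGap_nonneg_of_pointsInto hu (l := l)).elim le_of_lt fun h0 => h0.1.ge
    refine (h.mem_interior_or_vertex_or_openEdge hreg).imp id ?_
    rintro ⟨j, hj⟩
    have hper : Function.Periodic (fun j => (q j, q (j + 1))) (2 * m : ℤ) := fun j => by
      simp only [add_right_comm j _ 1, h.antiperiodic.periodic_two_mul _]
    obtain ⟨i, ⟨hri, hir⟩, hij⟩ := hper.exists_mem_Ioc (by lia) j (r - 2 * m)
    simp only [Prod.mk.injEq] at hij
    rw [openEdge, hij.1, hij.2] at hj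
    obtain ⟨n, rfl⟩ : ∃ n : ℕ, i = r - n := ⟨(r - i).toNat, by lia⟩
    refine hj.imp (fun hq => ⟨n, ?_, hq⟩) (fun he => ⟨n, ?_, he⟩)
    · have h1 := h.lt_add_of_pointsInto hu (hq ▸ edgeGap_self q _) (by lia)
      by_contra! hn
      have h2 := h.lt_add_of_pointsInto hu (j := r - n - 1)
        (by simpa [hq] using edgeGap_succ_self q (r - n - 1)) (by lia)
      lia
    · have := h.lt_add_of_pointsInto hu (edgeGap_eq_zero_of_mem_openEdge he) (by lia)
      lia
  · rintro (hu | ⟨i, hi, rfl⟩ | ⟨i, hi, hu⟩)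
    · exact h.pointsInto_of_mem_interior hu _
    · exact h.pointsInto_shortDiagonal_vertex (by lia) (by lia)
    · exact h.pointsInto_shortDiagonal_openEdge hu (by lia) (by lia)

end IsSymmVertexCycle

/-- The number of translates `S + x i` that contain `v`. -/
noncomputable def tileCount {ι : Type} (x : ι → ℝ × ℝ) (v : ℝ × ℝ) (S : Set (ℝ × ℝ)) : ℕ :=
  {i | v - x i ∈ S}.ncard

section TileCount

variable {ι : Type} {x : ι → ℝ × ℝ} {v : ℝ × ℝ} {K S T : Set (ℝ × ℝ)}

lemma tileCount_add (w : ℝ × ℝ) : tileCount x (v + w) S = tileCount x v {u | u + w ∈ S} := by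
  simp only [tileCount, Set.mem_ofPred_eq, add_sub_right_comm]

lemma exists_sub_mem_of_tileCount_pos (hS : 0 < tileCount x v S) : ∃ i, v - x i ∈ S :=
  Set.nonempty_of_ncard_ne_zero hS.ne'

lemma tileCount_pos (hK : {i | v - x i ∈ K}.Finite) (hS : S ⊆ K) {i : ι} (hi : v - x i ∈ S) :
    0 < tileCount x v S :=
  (Set.ncard_pos (hK.subset fun _ hj => hS hj)).2 ⟨i, hi⟩

lemma tileCount_mono (hT : {i | v - x i ∈ T}.Finite) (hST : S ⊆ T) :
    tileCount x v S ≤ tileCount x v T :=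
  Set.ncard_le_ncard (fun _ hi => hST hi) hT

lemma tileCount_union (hK : {i | v - x i ∈ K}.Finite) (hS : S ⊆ K) (hT : T ⊆ K)
    (hST : Disjoint S T) : tileCount x v (S ∪ T) = tileCount x v S + tileCount x v T :=
  Set.ncard_union_eq (hST.preimage _) (hK.subset fun _ hi => hS hi) (hK.subset fun _ hi => hT hi)

lemma tileCount_biUnion {κ : Type*} (hK : {i | v - x i ∈ K}.Finite) (s : Finset κ)
    (f : κ → Set (ℝ × ℝ)) (hf : ∀ a ∈ s, f a ⊆ K) (hd : (s : Set κ).PairwiseDisjoint f) :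
    tileCount x v (⋃ a ∈ s, f a) = ∑ a ∈ s, tileCount x v (f a) := by
  have hset : {i | v - x i ∈ ⋃ a ∈ s, f a} = ⋃ a ∈ (s : Set κ), {i | v - x i ∈ f a} := by
    ext i
    simp
  rw [tileCount, hset, Set.Finite.ncard_biUnion (s := fun a => {i | v - x i ∈ f a}) s.finite_toSet
    (fun a ha => hK.subset fun _ hi => hf a ha hi)
    (fun a ha b hb hab => (hd ha hb hab).preimage _), finsum_mem_coe_finset]
  rfl

end TileCount

lemma norm_le_of_sub_add_smul_mem {K : Set (ℝ × ℝ)} {R : ℝ} (hR : ∀ u ∈ K, ‖u‖ ≤ R)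
    {v y w : ℝ × ℝ} {ε : ℝ} (hε : ε ∈ Set.Ioo (0 : ℝ) 1) (hy : v - y + ε • w ∈ K) :
    ‖y‖ ≤ ‖v‖ + ‖w‖ + R :=
  calc ‖y‖ = ‖v + ε • w - (v - y + ε • w)‖ := by congr 1; abel
    _ ≤ ‖v‖ + ‖ε • w‖ + ‖v - y + ε • w‖ := by
      grw [norm_sub_le, norm_add_le]
    _ ≤ ‖v‖ + ‖w‖ + R := by
      gcongr
      · rw [norm_smul, Real.norm_of_nonneg hε.1.le]
        exact mul_le_of_le_one_left (norm_nonneg w) hε.2.le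
      · exact hR _ hy

namespace IsKFoldTranslativeTiling

variable {ι : Type} {K : Set (ℝ × ℝ)} {x : ι → ℝ × ℝ} {k : ℕ}
  (h : IsKFoldTranslativeTiling K x k)

include h

lemma finite_setOf_sub_mem (hK : Bornology.IsBounded K) (v : ℝ × ℝ) :
    {i | v - x i ∈ K}.Finite := by
  obtain ⟨R, hR⟩ := hK.exists_norm_le
  refine (h.1 (‖v‖ + R)).subset fun i hi => ?_
  calc ‖x i‖ = ‖v - (v - x i)‖ := by rw [sub_sub_cancel]
    _ ≤ ‖v‖ + ‖v - x i‖ := norm_sub_le _ _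
    _ ≤ ‖v‖ + R := by gcongr; exact hR _ hi

/-- Moving `v` slightly in a direction `w` that is parallel to no boundary segment reaches a point
on no boundary, which is covered exactly `k` times. -/
lemma tileCount_pointsInto (hK : Bornology.IsBounded K) {w : ℝ × ℝ}
    (hw : ∀ u, PointsInto K w u ∨ ∀ᶠ ε in 𝓝[>] (0 : ℝ), u + ε • w ∉ K) (v : ℝ × ℝ) :
    tileCount x v {u | PointsInto K w u} = k := by
  obtain ⟨R, hR⟩ := hK.exists_norm_le
  have hnear {i : ι} {ε : ℝ} (hε : ε ∈ Set.Ioo (0 : ℝ) 1) (hi : v - x i + ε • w ∈ K) :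
      ‖x i‖ ≤ ‖v‖ + ‖w‖ + R := norm_le_of_sub_add_smul_mem hR hε hi
  have hsmall : ∀ᶠ ε in 𝓝[>] (0 : ℝ), ε ∈ Set.Ioo (0 : ℝ) 1 := Ioo_mem_nhdsGT one_pos
  have hbound (i : ι) (hi : PointsInto K w (v - x i)) : ‖x i‖ ≤ ‖v‖ + ‖w‖ + R := by
    obtain ⟨ε, hmem, hε⟩ := (Filter.Eventually.and hi hsmall).exists
    exact hnear hε (interior_subset hmem)
  have hfin : {i | PointsInto K w (v - x i)}.Finite := (h.1 _).subset hbound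
  have hev : ∀ᶠ ε in 𝓝[>] (0 : ℝ), ∀ i ∈ {i | ‖x i‖ ≤ ‖v‖ + ‖w‖ + R},
      PointsInto K w (v - x i) ∧ v - x i + ε • w ∈ interior K ∨
        ¬ PointsInto K w (v - x i) ∧ v - x i + ε • w ∉ K := by
    refine (eventually_all_finite (h.1 _)).2 fun i _ => ?_
    by_cases hi : PointsInto K w (v - x i)
    · exact hi.mono fun ε hε => .inl ⟨hi, hε⟩
    · exact ((hw _).resolve_left hi).mono fun ε hε => .inr ⟨hi, hε⟩
  obtain ⟨ε, hεi, hε⟩ := (hev.and hsmall).exists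
  have hshift (i : ι) : v + ε • w - x i = v - x i + ε • w := by abel
  refine le_antisymm ?_ ?_
  · change {i | PointsInto K w (v - x i)}.ncard ≤ k
    rw [Set.ncard_eq_toFinset_card _ hfin]
    refine h.2.2 (v + ε • w) _ fun i hi => ?_
    have hi' : PointsInto K w (v - x i) := hfin.mem_toFinset.1 hi
    rw [hshift]
    exact ((hεi i (hbound i hi')).resolve_right fun hout => hout.1 hi').2
  · obtain ⟨s, hks, hs⟩ := h.2.1 (v + ε • w)
    refine hks.trans ?_
    rw [tileCount, ← Set.ncard_coe_finset]
    refine Set.ncard_le_ncard (fun i hi => ?_) hfin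
    have hmem := hs i hi
    rw [hshift] at hmem
    exact ((hεi i (hnear hε hmem)).resolve_right fun hout => hout.2 hmem).1

end IsKFoldTranslativeTiling

namespace IsSymmVertexCycle

variable {m : ℕ} {q : ℤ → ℝ × ℝ} (h : IsSymmVertexCycle m q)

include h

lemma openEdge_subset_region (j : ℤ) : openEdge q j ⊆ region q :=
  (convex_region q).openSegment_subset (h.vertex_mem_region _) (h.vertex_mem_region _)

lemma disjoint_interior_vertex (j : ℤ) : Disjoint (interior (region q)) {q j} :=
  Set.disjoint_singleton_right.2 fun hj =>
    (h.mem_interior_region.1 hj j).ne' (edgeGap_self q j)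

lemma disjoint_interior_openEdge (j : ℤ) : Disjoint (interior (region q)) (openEdge q j) :=
  Set.disjoint_left.2 fun _ hu hj =>
    (h.mem_interior_region.1 hu j).ne' (edgeGap_eq_zero_of_mem_openEdge hj)

lemma disjoint_vertex_openEdge (j l : ℤ) : Disjoint {q l} (openEdge q j) := by
  have hm := h.two_le
  obtain ⟨i, ⟨hji, hij⟩, hl⟩ := h.antiperiodic.periodic_two_mul.exists_mem_Ioc (by lia) l j
  rw [hl, Set.disjoint_singleton_left]
  intro hi
  rcases hij.lt_or_eq with hlt | rfl
  · exact (h.edgeGap_pos_of_mem_openEdge hi hji hlt).ne' (edgeGap_self q i)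
  · refine (h.edgeGap_pos_of_mem_openEdge hi (l := j + 2 * m - 1) (by lia) (by lia)).ne' ?_
    simpa using edgeGap_succ_self q (j + 2 * m - 1)

lemma disjoint_openEdge {j l : ℤ} (hjl : j < l) (hlj : l < j + 2 * m) :
    Disjoint (openEdge q j) (openEdge q l) :=
  Set.disjoint_left.2 fun _ hj hl =>
    (h.edgeGap_pos_of_mem_openEdge hj hjl hlj).ne' (edgeGap_eq_zero_of_mem_openEdge hl)

lemma vertex_ne {j l : ℤ} (hjl : j < l) (hlj : l < j + 2 * m) : q j ≠ q l := by
  have hm := h.two_le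
  intro hq
  by_cases hl : l = j + 2 * m - 1
  · refine (h.edgeGap_vertex_pos (j := j) (l := l - 1) (by lia) (by lia)).ne' ?_
    simpa [hq] using edgeGap_succ_self q (l - 1)
  · refine (h.edgeGap_vertex_pos (j := j) (l := l) (by lia) (by lia)).ne' ?_
    rw [hq, edgeGap_self]

lemma pairwiseDisjoint_vertex (r : ℤ) {n : ℕ} (hn : n ≤ 2 * m) :
    (Finset.range n : Set ℕ).PairwiseDisjoint fun i : ℕ => ({q (r - i)} : Set (ℝ × ℝ)) := by
  intro i hi j hj hij
  simp only [Finset.coe_range, Set.mem_Iio] at hi hj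
  refine Set.disjoint_singleton.2 ?_
  rcases hij.lt_or_gt with hlt | hlt
  · exact (h.vertex_ne (by lia) (by lia)).symm
  · exact h.vertex_ne (by lia) (by lia)

lemma pairwiseDisjoint_openEdge (r : ℤ) {n : ℕ} (hn : n ≤ 2 * m) :
    (Finset.range n : Set ℕ).PairwiseDisjoint fun i : ℕ => openEdge q (r - i) := by
  intro i hi j hj hij
  simp only [Finset.coe_range, Set.mem_Iio] at hi hj
  rcases hij.lt_or_gt with hlt | hlt
  · exact (h.disjoint_openEdge (by lia) (by lia)).symm
  · exact h.disjoint_openEdge (by lia) (by lia)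

lemma tileCount_union_faces {ι : Type} {x : ι → ℝ × ℝ} {v : ℝ × ℝ}
    (hfin : {i | v - x i ∈ region q}.Finite) {S : Set (ℝ × ℝ)} (hS : S ⊆ interior (region q))
    (r : ℤ) {n n' : ℕ} (hn : n ≤ 2 * m) (hn' : n' ≤ 2 * m) :
    tileCount x v (S ∪ ((⋃ i ∈ Finset.range n, {q (r - i)}) ∪
        ⋃ i ∈ Finset.range n', openEdge q (r - i))) =
      tileCount x v S + (∑ i ∈ Finset.range n, tileCount x v {q (r - i)} +
        ∑ i ∈ Finset.range n', tileCount x v (openEdge q (r - i))) := by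
  have hV : ⋃ i ∈ Finset.range n, {q (r - i)} ⊆ region q :=
    Set.iUnion₂_subset fun _ _ => Set.singleton_subset_iff.2 (h.vertex_mem_region _)
  have hE : ⋃ i ∈ Finset.range n', openEdge q (r - i) ⊆ region q :=
    Set.iUnion₂_subset fun _ _ => h.openEdge_subset_region _
  rw [tileCount_union hfin (hS.trans interior_subset) (Set.union_subset hV hE),
    tileCount_union hfin hV hE,
    tileCount_biUnion hfin _ _ (fun _ _ => Set.singleton_subset_iff.2 (h.vertex_mem_region _))
      (h.pairwiseDisjoint_vertex r hn),
    tileCount_biUnion hfin _ _ (fun _ _ => h.openEdge_subset_region _)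
      (h.pairwiseDisjoint_openEdge r hn')]
  · simp only [Set.disjoint_iUnion_left, Set.disjoint_iUnion_right]
    exact fun _ _ _ _ => h.disjoint_vertex_openEdge _ _
  · refine Disjoint.mono_left hS ?_
    simp only [Set.disjoint_union_right, Set.disjoint_iUnion_right]
    exact ⟨fun _ _ => h.disjoint_interior_vertex _, fun _ _ => h.disjoint_interior_openEdge _⟩

end IsSymmVertexCycle

/-- The combinatorics of a `k`-fold tiling by a centrally symmetric `2 * m`-gon around a point:
`φ` tiles contain the point in their interior, `a j` have it as their `j`-th vertex and `b j` have
it inside their `j`-th side. The equation `sum_eq r` counts the tiles met when leaving the point in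
the direction of the `r`-th short diagonal. -/
structure IsLocalCount (m k φ : ℕ) (a b : ℤ → ℕ) : Prop where
  two_le : 2 ≤ m
  periodic_vertex : Function.Periodic a (2 * m)
  periodic_side : Function.Periodic b (2 * m)
  sum_eq (r : ℤ) :
    φ + (∑ i ∈ Finset.range (m - 1), a (r - i) + ∑ i ∈ Finset.range m, b (r - i)) = k

namespace IsLocalCount

variable {m k φ : ℕ} {a b : ℤ → ℕ} (h : IsLocalCount m k φ a b)

include h

lemma add_eq_add (j : ℤ) : a j + b j = a (j + m + 1) + b (j + m) := by
  obtain ⟨n, rfl⟩ : ∃ n, m = n + 2 := ⟨m - 2, by have := h.two_le; lia⟩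
  have hlow := h.sum_eq (j - 1)
  have hhigh := h.sum_eq j
  have ha := h.periodic_vertex (j - n - 1)
  have hb := h.periodic_side (j - n - 2)
  rw [show n + 2 - 1 = n + 1 by lia, Finset.sum_range_succ', Finset.sum_range_succ'] at hhigh
  rw [show n + 2 - 1 = n + 1 by lia, Finset.sum_range_succ, Finset.sum_range_succ] at hlow
  push_cast at hlow hhigh ha hb
  ring_nf at *
  lia

lemma vertex_add_vertex (j : ℤ) : a j + a (j + m) = a 0 + a m := by
  have hconst : Function.Periodic (fun j => a j + a (j + m)) 1 := fun j => by
    have h1 := h.add_eq_add j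
    have h2 := h.add_eq_add (j + m)
    rw [show j + m + m = j + 2 * m by ring, h.periodic_side,
      show j + 2 * m + 1 = j + 1 + 2 * m by ring, h.periodic_vertex] at h2
    simp only [show j + 1 + m = j + m + 1 by ring]
    lia
  simpa using hconst.zsmul_eq j

lemma side_add (j : ℤ) : b (j + m) + (a 0 + a m) = b j + a j + a (j + 1) := by
  have h1 := h.add_eq_add j
  have h2 := h.vertex_add_vertex (j + 1)
  rw [show j + 1 + m = j + m + 1 by ring] at h2
  lia

lemma two_mul_eq (r : ℤ) :
    2 * φ + ((m - 1) * (a 0 + a m) + ∑ i ∈ Finset.range m, (b (r - i) + b (r - i + m))) =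
      2 * k := by
  have h1 := h.sum_eq r
  have h2 := h.sum_eq (r + m)
  simp only [show ∀ i : ℕ, r + m - i = r - i + m by intro; ring] at h2
  have hsum : ∑ i ∈ Finset.range (m - 1), (a (r - i) + a (r - i + m)) =
      (m - 1) * (a 0 + a m) := by
    simp only [h.vertex_add_vertex, Finset.sum_const, Finset.card_range, smul_eq_mul]
  rw [← hsum, Finset.sum_add_distrib, Finset.sum_add_distrib]
  lia

lemma two_mul_add_le {j : ℤ} (hj : 0 < a j) : 2 * φ + (m - 1) ≤ 2 * k := by
  have h1 := h.two_mul_eq 0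
  have h2 := h.vertex_add_vertex j
  have : m - 1 ≤ (m - 1) * (a 0 + a m) := Nat.le_mul_of_pos_right _ (by lia)
  lia

end IsLocalCount

section Dodecagon

variable {k φ : ℕ} {a b ψ : ℤ → ℕ}

lemma IsLocalCount.two_mul_eq_of_six (h : IsLocalCount 6 k φ a b) (c : ℤ) :
    2 * φ + 5 * (a 0 + a 6) + ((b c + b (c + 6)) + (b (c + 1) + b (c + 7)) +
      (b (c + 2) + b (c + 8)) + (b (c + 3) + b (c + 9)) + (b (c + 4) + b (c + 10)) +
      (b (c + 5) + b (c + 11))) = 2 * k := by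
  have := h.two_mul_eq (c + 5)
  simp only [Finset.sum_range_succ, Finset.sum_range_zero] at this
  push_cast at this
  ring_nf at this ⊢
  lia

lemma IsLocalCount.eq_two_of_lt_six (h : IsLocalCount 6 k φ a b) (hk : k < 6) {j : ℤ}
    (hj : 0 < a j) (hab : ∀ r, 0 < a r → 3 ≤ φ + a r + b r) :
    φ = 2 ∧ a 0 + a 6 = 1 ∧ ∃ c, b c = 1 := by
  have hκ (i : ℤ) : a i + a (i + 6) = a 0 + a 6 := h.vertex_add_vertex i
  have hκ_pos : 0 < a 0 + a 6 := hκ j ▸ Nat.add_pos_left hj _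
  have hside (i : ℤ) : 3 ≤ φ + (a 0 + a 6) + (b i + b (i + 6)) := by
    have := hκ i
    rcases Nat.eq_zero_or_pos (a i) with h0 | hi
    · have := hab (i + 6) (by lia)
      lia
    · have := hab i hi
      lia
  have hsum := h.two_mul_eq_of_six
  have hvalues : φ = 2 ∧ a 0 + a 6 = 1 := by
    have := hsum 0
    have := hside 0; have := hside 1; have := hside 2
    have := hside 3; have := hside 4; have := hside 5
    lia
  refine ⟨hvalues.1, hvalues.2, ?_⟩
  by_contra! hne
  have hzero (c : ℤ) : b c = 0 := by
    have := hsum c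
    have := hne c
    lia
  have := hsum 0
  simp only [hzero, hvalues] at this
  lia

lemma IsLocalCount.exists_eq_zero_of_lt_six (h : IsLocalCount 6 k φ a b) (hk : k < 6) {j : ℤ}
    (hj : 0 < a j) (hψ : ∀ r, 0 < a r → 3 + ψ r ≤ φ + a r + b r) :
    0 < φ ∧ ∃ c, ψ (c + 1) = 0 ∧ ψ (c + 6) = 0 ∧ ψ (c + 8) = 0 := by
  obtain ⟨rfl, hκ, c, hc⟩ := h.eq_two_of_lt_six hk hj fun r hr =>
    (Nat.le_add_right _ _).trans (hψ r hr)
  have hflip (i : ℤ) : b (i + 6) + 1 = b i + a i + a (i + 1) := hκ ▸ h.side_add i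
  have hpair (i : ℤ) : a i + a (i + 6) = 1 := hκ ▸ h.vertex_add_vertex i
  have hsum := h.two_mul_eq_of_six c
  have := hflip c; have := hflip (c + 1); have := hflip (c + 2)
  have := hpair c; have := hpair (c + 1); have := hpair (c + 2); have := hpair (c + 3)
  have := hψ (c + 2); have := hψ (c + 7); have := hψ (c + 9)
  exact ⟨two_pos, c + 1, by lia, by lia, by lia⟩

end Dodecagon

namespace IsSymmVertexCycle

section Tiling

variable {m k : ℕ} {q : ℤ → ℝ × ℝ} {ι : Type} {x : ι → ℝ × ℝ} (h : IsSymmVertexCycle m q)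
  (htile : IsKFoldTranslativeTiling (region q) x k)

include h htile

lemma finite_setOf_sub_mem_region (v : ℝ × ℝ) : {i | v - x i ∈ region q}.Finite :=
  htile.finite_setOf_sub_mem h.isBounded_region v

lemma isLocalCount (v : ℝ × ℝ) :
    IsLocalCount m k (tileCount x v (interior (region q))) (fun j => tileCount x v {q j})
      (fun j => tileCount x v (openEdge q j)) where
  two_le := h.two_le
  periodic_vertex j := by simp only [h.antiperiodic.periodic_two_mul j]
  periodic_side j := by
    simp only [openEdge, add_right_comm j _ 1, h.antiperiodic.periodic_two_mul _]
  sum_eq r := by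
    rw [← h.tileCount_union_faces (h.finite_setOf_sub_mem_region htile v) subset_rfl r
      (by lia) (by lia), ← h.setOf_pointsInto_shortDiagonal]
    exact htile.tileCount_pointsInto h.isBounded_region
      (fun u => h.pointsInto_shortDiagonal_or_eventually_notMem u r) v

lemma tileCount_le_tileCount_add_edge (hm : 3 ≤ m) (v : ℝ × ℝ) (r : ℤ) :
    tileCount x v {u ∈ interior (region q) | u + edge q r ∈ interior (region q)} +
        (∑ i ∈ Finset.range (m - 2), tileCount x v {q (r - 1 - i)} +
          ∑ i ∈ Finset.range (m - 1), tileCount x v (openEdge q (r - 1 - i))) ≤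
      tileCount x (v + edge q r) (interior (region q)) := by
  have hfin := h.finite_setOf_sub_mem_region htile
  rw [← h.tileCount_union_faces (hfin v) (Set.sep_subset _ _) (r - 1) (by lia) (by lia),
    tileCount_add]
  refine tileCount_mono ((hfin (v + edge q r)).subset fun i hi => ?_) ?_
  · rw [Set.mem_ofPred_eq, add_sub_right_comm]
    exact interior_subset hi
  · refine Set.union_subset (fun u hu => hu.2) (Set.union_subset ?_ ?_)
    · refine Set.iUnion₂_subset fun i hi => Set.singleton_subset_iff.2 ?_
      rw [Finset.mem_range] at hi
      exact h.vertex_add_edge_mem_interior (by lia) (by lia)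
    · refine Set.iUnion₂_subset fun i hi u hu => ?_
      rw [Finset.mem_range] at hi
      exact h.add_edge_mem_interior_of_mem_openEdge hm hu (by lia) (by lia)

lemma tileCount_vertex_pos {v : ℝ × ℝ} {i : ι} {j : ℤ} (hi : v - x i = q j) :
    0 < tileCount x v {q j} :=
  tileCount_pos (h.finite_setOf_sub_mem_region htile v)
    (Set.singleton_subset_iff.2 (h.vertex_mem_region j)) hi

/-- If a tile has `v` as its `r`-th vertex, then `v + edge q r` is its next vertex, so the bound on
the number of interiors that contain a vertex applies there. -/
lemma two_mul_tileCount_le (hm : 3 ≤ m) {v : ℝ × ℝ} {r : ℤ} (hr : 0 < tileCount x v {q r}) :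
    2 * tileCount x v {u ∈ interior (region q) | u + edge q r ∈ interior (region q)} + (m - 1) ≤
      2 * (tileCount x v (interior (region q)) + tileCount x v {q r} +
        tileCount x v (openEdge q r)) := by
  obtain ⟨i, hi⟩ := exists_sub_mem_of_tileCount_pos hr
  have hnext : v + edge q r - x i = q (r + 1) := by
    rw [add_sub_right_comm, hi, edge, add_sub_cancel]
  have hbound := (h.isLocalCount htile (v + edge q r)).two_mul_add_le
    (h.tileCount_vertex_pos htile hnext)
  have hle := h.tileCount_le_tileCount_add_edge htile hm v r
  have hsum := (h.isLocalCount htile v).sum_eq r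
  obtain ⟨n, rfl⟩ : ∃ n, m = n + 2 := ⟨m - 2, by lia⟩
  rw [show n + 2 - 1 = n + 1 by lia, Finset.sum_range_succ', Finset.sum_range_succ'] at hsum
  simp only [Nat.cast_succ, Nat.cast_zero, sub_zero, sub_add_eq_sub_sub_swap] at hsum
  rw [Nat.add_sub_cancel] at hle
  lia

end Tiling

theorem six_le {k : ℕ} {q : ℤ → ℝ × ℝ} (h : IsSymmVertexCycle 6 q) (hk : 0 < k) {ι : Type}
    {x : ι → ℝ × ℝ} (htile : IsKFoldTranslativeTiling (region q) x k) : 6 ≤ k := by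
  obtain ⟨s, hks, -⟩ := htile.2.1 0
  obtain ⟨i₀, -⟩ := Finset.card_pos.1 (hk.trans_le hks)
  have hv : q 0 + x i₀ - x i₀ = q 0 := add_sub_cancel_right _ _
  set v := q 0 + x i₀
  by_contra! hk6
  obtain ⟨hφ, c, h1, h6, h8⟩ := (h.isLocalCount htile v).exists_eq_zero_of_lt_six hk6
    (ψ := fun r => tileCount x v {u ∈ interior (region q) | u + edge q r ∈ interior (region q)})
    (h.tileCount_vertex_pos htile hv)
    (fun r hr => by have := h.two_mul_tileCount_le htile (by lia) hr; lia)
  obtain ⟨i, hi⟩ := exists_sub_mem_of_tileCount_pos hφ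
  have hnone {r : ℤ}
      (hr : tileCount x v {u ∈ interior (region q) | u + edge q r ∈ interior (region q)} = 0) :
      v - x i + edge q r ∉ interior (region q) := fun hmem =>
    (tileCount_pos (h.finite_setOf_sub_mem_region htile v)
      ((Set.sep_subset _ _).trans interior_subset) ⟨hi, hmem⟩).ne' hr
  have hedge (j : ℤ) : edge q (j + 6) = -edge q j := h.edge_antiperiodic j
  rcases h.add_edge_mem_interior_or (by lia) hi c with hin | hin | hin
  · exact hnone h1 hin
  · exact hnone h6 (by rwa [hedge, ← sub_eq_add_neg])
  · exact hnone h8 (by rwa [show c + 8 = c + 2 + 6 by ring, hedge, ← sub_eq_add_neg])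

end IsSymmVertexCycle

lemma lt_of_mul_eq_neg_mul_add_mul {a b c f g w : ℝ} (ha : 0 < a) (hb : 0 < b) (hw : 0 < w)
    (hc : c < a + b) (hf : f ≤ 0) (hwf : -w ≤ f) (h : c * f = -a * w + b * g) : f < g := by
  have hkey : b * (g - f) = a * (w + f) + (a + b - c) * -f := by linear_combination -h
  refine sub_pos.1 (pos_of_mul_pos_right ?_ hb.le)
  rw [hkey]
  rcases hf.lt_or_eq with hneg | rfl
  · exact add_pos_of_nonneg_of_pos (mul_nonneg ha.le (by linarith))
      (mul_pos (by linarith) (by linarith))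
  · simpa using mul_pos ha hw

section ConvexPosition

variable {m : ℕ} {q : ℤ → ℝ × ℝ} (hq : Function.Antiperiodic q m)
  (hpos : ∀ i j : ℤ, i < j → j < i + m → 0 < wedge (q i) (q j))
  (hlt : ∀ i j l : ℤ, i < j → j < l → l < i + m →
    wedge (q i) (q l) < wedge (q i) (q j) + wedge (q j) (q l))

include hq hpos

lemma wedge_nonneg_of_antiperiodic {i j : ℤ} (hij : i < j) (hji : j ≤ i + m) :
    0 ≤ wedge (q i) (q j) := by
  rcases hji.lt_or_eq with h | rfl
  · exact (hpos i j hij h).le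
  · rw [hq, map_neg, wedge_self, neg_zero]

include hlt

lemma wedge_lt_add_of_antiperiodic {i j l : ℤ} (hij : i < j) (hjl : j < l) (hli : l ≤ i + m) :
    wedge (q i) (q l) < wedge (q i) (q j) + wedge (q j) (q l) := by
  rcases hli.lt_or_eq with h | rfl
  · exact hlt i j l hij hjl h
  · rw [hq, map_neg, wedge_self, neg_zero, ← hq]
    exact add_pos (hpos i j hij hjl) (hpos j (i + m) hjl (by lia))

lemma wedge_edge_mem_Icc {i l : ℤ} (hil : i < l) (hli : l ≤ i + m) :
    wedge (edge q i) (q l) ∈ Set.Icc (-wedge (q i) (q (i + 1))) (wedge (q i) (q (i + 1))) := by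
  have hf : wedge (edge q i) (q l) = wedge (q (i + 1)) (q l) - wedge (q i) (q l) := by
    rw [edge, map_sub, LinearMap.sub_apply]
  rw [hf]
  constructor
  · rcases (show i + 1 ≤ l by lia).eq_or_lt with rfl | h
    · simp only [wedge_self, zero_sub, le_refl]
    · have := wedge_lt_add_of_antiperiodic hq hpos hlt (lt_add_one i) h hli
      linarith
  · rcases hli.lt_or_eq with h | rfl
    · have := wedge_lt_add_of_antiperiodic hq hpos hlt (i := l - m) (j := i) (l := i + 1)
        (by lia) (by lia) (by lia)
      rw [hq.sub_eq, map_neg, LinearMap.neg_apply, LinearMap.neg_apply, wedge_swap (q l),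
        wedge_swap (q l)] at this
      linarith
    · rw [hq, map_neg, map_neg, wedge_self, wedge_swap (q (i + 1))]
      linarith

/-- The height of `q l` over side `i` increases with `l`: below the level of the centre one compares
with the two ends of side `i`, above it with those of the opposite side. -/
lemma wedge_edge_lt_wedge_edge_succ (hm : 2 ≤ m) {i l : ℤ} (hil : i < l) (hli : l < i + m) :
    wedge (edge q i) (q l) < wedge (edge q i) (q (l + 1)) := by
  obtain ⟨hlow, -⟩ := wedge_edge_mem_Icc hq hpos hlt hil hli.le
  obtain ⟨-, hhigh⟩ := wedge_edge_mem_Icc hq hpos hlt (i := i) (l := l + 1) (by lia) (by lia)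
  have hw := hpos i (i + 1) (by lia) (by lia)
  have hl := hpos l (l + 1) (by lia) (by lia)
  have hstart : wedge (edge q i) (q i) = -wedge (q i) (q (i + 1)) := by
    rw [edge, map_sub, LinearMap.sub_apply, wedge_self, sub_zero, wedge_swap]
  have hend : wedge (edge q i) (q (i + 1 + m)) = wedge (q i) (q (i + 1)) := by
    rw [hq, edge, map_sub, LinearMap.sub_apply, map_neg, map_neg, wedge_self]
    ring
  have hbelow := wedge_plucker (q i) (q l) (q (l + 1)) (edge q i)
  have habove := wedge_plucker (q l) (q (l + 1)) (q (i + 1 + m)) (edge q i)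
  rw [hstart] at hbelow
  rw [hend] at habove
  rcases le_or_gt (wedge (edge q i) (q l)) 0 with hneg | hpos_l
  · exact lt_of_mul_eq_neg_mul_add_mul hl (hpos i l hil hli) hw
      ((wedge_lt_add_of_antiperiodic hq hpos hlt hil (lt_add_one l) (by lia)).trans_eq
        (add_comm _ _)) hneg hlow (by linarith)
  · have hb := hpos (l + 1) (i + 1 + m) (by lia) (by lia)
    have hpos_succ : 0 < wedge (edge q i) (q (l + 1)) := by
      refine pos_of_mul_pos_right ?_
        (wedge_nonneg_of_antiperiodic hq hpos (i := l) (j := i + 1 + m) (by lia) (by lia))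
      rw [habove]
      positivity
    refine neg_lt_neg_iff.1 (lt_of_mul_eq_neg_mul_add_mul hl hb hw
      (wedge_lt_add_of_antiperiodic hq hpos hlt (by lia) (by lia) (by lia)) ?_ ?_ ?_ (g := _))
    · linarith
    · linarith
    · linear_combination -habove

/-- Vectors in convex position form a vertex cycle: `hlt` says, in terms of areas, that `q j` lies
beyond the segment from `q i` to `q l`. -/
lemma IsSymmVertexCycle.of_wedge_lt (hm : 2 ≤ m) : IsSymmVertexCycle m q where
  two_le := hm
  antiperiodic := hq
  wedge_edge_pos i j hij hji := by
    rw [edge.eq_1 q j, map_sub]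
    exact sub_pos.2 (wedge_edge_lt_wedge_edge_succ hq hpos hlt hm hij hji)

end ConvexPosition

/-- The argument in `(-π, π]` of a plane vector, read as a complex number; `0` for the zero
vector. -/
noncomputable def angle (v : ℝ × ℝ) : ℝ := Complex.arg ⟨v.1, v.2⟩

lemma exists_polar {v : ℝ × ℝ} (hv : 0 < angle v) :
    ∃ r : ℝ, 0 < r ∧ r * Real.cos (angle v) = v.1 ∧ r * Real.sin (angle v) = v.2 := by
  refine ⟨‖(⟨v.1, v.2⟩ : ℂ)‖, norm_pos_iff.2 fun h => ?_, Complex.norm_mul_cos_arg _,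
    Complex.norm_mul_sin_arg _⟩
  rw [angle, h, Complex.arg_zero] at hv
  exact hv.false

lemma wedge_pos_of_angle_lt {a b : ℝ × ℝ} (ha : 0 < angle a) (hab : angle a < angle b) :
    0 < wedge a b := by
  obtain ⟨r, hr, har, has⟩ := exists_polar ha
  obtain ⟨s, hs, hbr, hbs⟩ := exists_polar (ha.trans hab)
  have hsin : wedge a b = r * s * Real.sin (angle b - angle a) := by
    rw [wedge_apply, ← har, ← has, ← hbr, ← hbs, Real.sin_sub]
    ring
  have hb : angle b ≤ Real.pi := Complex.arg_le_pi _
  rw [hsin]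
  exact mul_pos (mul_pos hr hs) (Real.sin_pos_of_pos_of_lt_pi (sub_pos.2 hab) (by linarith))

lemma angle_pos_iff {v : ℝ × ℝ} : 0 < angle v ↔ 0 < v.2 ∨ v.2 = 0 ∧ v.1 < 0 := by
  rw [angle, lt_iff_le_and_ne, ne_comm, Ne, Complex.arg_nonneg_iff, Complex.arg_eq_zero_iff]
  grind

lemma angle_neg_pos_iff {v : ℝ × ℝ} (hv : v ≠ 0) : 0 < angle (-v) ↔ ¬0 < angle v := by
  have : v.1 ≠ 0 ∨ v.2 ≠ 0 := by
    contrapose! hv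
    exact Prod.ext hv.1 hv.2
  simp only [angle_pos_iff, Prod.fst_neg, Prod.snd_neg]
  grind

lemma exists_smul_eq_of_angle_eq {a b : ℝ × ℝ} (ha : a ≠ 0) (hb : b ≠ 0)
    (hab : angle a = angle b) : ∃ r : ℝ, 0 < r ∧ r • a = b := by
  have hray : SameRay ℝ (⟨a.1, a.2⟩ : ℂ) ⟨b.1, b.2⟩ := Complex.sameRay_of_arg_eq hab
  have := hray.map Complex.equivRealProdLm.toLinearMap
  exact this.exists_pos_left ha hb

lemma vadd_mem_extremePoints_vadd {E : Type*} [AddCommGroup E] [Module ℝ E] {s : Set E} {v : E}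
    (c : E) (hv : v ∈ s.extremePoints ℝ) : c +ᵥ v ∈ (c +ᵥ s).extremePoints ℝ := by
  rw [mem_extremePoints_iff_left] at hv ⊢
  refine ⟨Set.vadd_mem_vadd_set hv.1, ?_⟩
  rintro _ ⟨a, ha, rfl⟩ _ ⟨b, hb, rfl⟩ hab
  exact congrArg (c + ·) (hv.2 a ha b hb ((mem_openSegment_translate ℝ c).1 hab))

lemma eq_of_smul_add_smul_mem_extremePoints {E : Type*} [AddCommGroup E] [Module ℝ E] {s : Set E}
    (hs : Convex ℝ s) (h0 : (0 : E) ∈ s) {a b : E} (ha : a ∈ s) (hb : b ∈ s) {α β : ℝ} (hα : 0 < α)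
    (hβ : 0 < β) (hαβ : α + β ≤ 1) (hw : α • a + β • b ∈ s.extremePoints ℝ) :
    α • a + β • b = a := by
  have hα1 : 0 < 1 - α := by linarith
  have hy : (β / (1 - α)) • b ∈ s :=
    hs.smul_mem_of_zero_mem h0 hb ⟨by positivity, (div_le_one hα1).2 (by linarith)⟩
  refine (((mem_extremePoints_iff_left.1 hw).2 a ha _ hy
    ⟨α, 1 - α, hα, hα1, by ring, ?_⟩)).symm
  rw [smul_smul, mul_div_cancel₀ _ hα1.ne']

lemma exists_strictMono_comp_range_eq {α β : Type*} [LinearOrder β] {s : Finset α} {n : ℕ}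
    (hs : s.card = n) {f : α → β} (hf : Set.InjOn f s) :
    ∃ u : Fin n → α, StrictMono (f ∘ u) ∧ Set.range u = s := by
  classical
  have hcard : (s.image f).card = n := (Finset.card_image_of_injOn hf).trans hs
  have hmem (i : Fin n) := Finset.mem_image.1 ((s.image f).orderEmbOfFin_mem hcard i)
  choose u hu hfu using hmem
  refine ⟨u, fun i j hij => ?_, ?_⟩
  · rw [Function.comp_apply, Function.comp_apply, hfu, hfu]
    exact ((s.image f).orderEmbOfFin hcard).strictMono hij
  · refine (Set.range_subset_iff.2 hu).antisymm fun v hv => ?_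
    have hfv : f v ∈ Set.range ((s.image f).orderEmbOfFin hcard) := by
      rw [Finset.range_orderEmbOfFin]
      exact Finset.mem_image_of_mem f hv
    obtain ⟨i, hi⟩ := hfv
    exact ⟨i, hf (hu i) hv ((hfu i).trans hi)⟩

lemma wedge_pos_of_antiperiodic {m : ℕ} {q : ℤ → ℝ × ℝ} (hq : Function.Antiperiodic q m)
    (hpos : ∀ i j : ℤ, 0 ≤ i → i < j → j < m → 0 < wedge (q i) (q j)) (i j : ℤ) (hij : i < j)
    (hji : j < i + m) : 0 < wedge (q i) (q j) := by
  obtain ⟨d, rfl⟩ : ∃ d, j = i + d := ⟨j - i, by ring⟩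
  have hper : Function.Periodic (fun i => wedge (q i) (q (i + d))) (m : ℤ) := by
    intro i
    simp only [add_right_comm i (m : ℤ) d, hq _, map_neg, LinearMap.neg_apply, neg_neg]
  obtain ⟨l, ⟨hl0, hlm⟩, hl⟩ := hper.exists_mem_Ico₀ (by lia) i
  rw [hl]
  rcases lt_or_ge (l + d) m with h | h
  · exact hpos l (l + d) hl0 (by lia) h
  · rw [← sub_add_cancel (l + d) (m : ℤ), hq, map_neg, ← wedge_swap]
    exact hpos (l + d - m) l (by lia) (by lia) hlm

namespace IsConvexPolygon

variable {P : Set (ℝ × ℝ)} {V : Finset (ℝ × ℝ)} (hP : IsConvexPolygon P V)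

include hP

protected lemma vadd (c : ℝ × ℝ) : IsConvexPolygon (c +ᵥ P) (c +ᵥ V) := by
  obtain ⟨hhull, hext, hint⟩ := hP
  refine ⟨by rw [hhull, Finset.coe_vadd_finset, convexHull_vadd], fun v hv => ?_, ?_⟩
  · obtain ⟨w, hw, rfl⟩ := Finset.mem_vadd_finset.1 hv
    exact vadd_mem_extremePoints_vadd c (hext w hw)
  · rw [interior_vadd]
    exact hint.vadd_set

lemma extremePoints_eq : P.extremePoints ℝ = V := by
  refine subset_antisymm ?_ hP.2.1
  rw [hP.1]
  exact extremePoints_convexHull_subset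

lemma subset : (V : Set (ℝ × ℝ)) ⊆ P := hP.extremePoints_eq ▸ extremePoints_subset

lemma convex : Convex ℝ P := hP.1 ▸ convex_convexHull ℝ _

variable (hneg : -P = P)

include hneg

lemma neg_mem {v : ℝ × ℝ} (hv : v ∈ V) : -v ∈ V := by
  have h := image_extremePoints (𝕜 := ℝ) (LinearEquiv.neg ℝ : (ℝ × ℝ) ≃ₗ[ℝ] ℝ × ℝ) P
  rw [show ⇑(LinearEquiv.neg ℝ : (ℝ × ℝ) ≃ₗ[ℝ] ℝ × ℝ) = Neg.neg from rfl, Set.image_neg_eq_neg,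
    Set.image_neg_eq_neg, hneg, hP.extremePoints_eq] at h
  exact Finset.mem_coe.1 (h ▸ Set.neg_mem_neg.2 (Finset.mem_coe.2 hv))

lemma zero_mem : (0 : ℝ × ℝ) ∈ P := by
  obtain ⟨p, hp⟩ := hP.2.2.mono interior_subset
  have hp' : -p ∈ P := Set.mem_neg.1 (hneg.symm ▸ hp)
  convert hP.convex hp hp' (by norm_num : (0 : ℝ) ≤ 1 / 2) (by norm_num : (0 : ℝ) ≤ 1 / 2)
    (by norm_num)
  module

lemma smul_add_smul_eq_left {a b : ℝ × ℝ} (ha : a ∈ V) (hb : b ∈ V) {α β : ℝ} (hα : 0 < α)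
    (hβ : 0 < β) (hαβ : α + β ≤ 1) (hw : α • a + β • b ∈ V) : α • a + β • b = a :=
  eq_of_smul_add_smul_mem_extremePoints hP.convex (hP.zero_mem hneg) (hP.subset ha) (hP.subset hb)
    hα hβ hαβ (hP.2.1 _ hw)

lemma zero_notMem (hV : 1 < V.card) : (0 : ℝ × ℝ) ∉ V := by
  intro h0
  obtain ⟨v, hv, hv0⟩ := Finset.exists_mem_ne hV 0
  have hmid : (1 / 2 : ℝ) • v + (1 / 2 : ℝ) • -v = 0 := by module
  have := hP.smul_add_smul_eq_left hneg hv (hP.neg_mem hneg hv) one_half_pos one_half_pos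
    (by norm_num) (hmid ▸ h0)
  exact hv0 (this.symm.trans hmid)

lemma smul_eq_self {a : ℝ × ℝ} (ha : a ∈ V) {r : ℝ} (hr0 : 0 < r) (hr1 : r ≤ 1)
    (hra : r • a ∈ V) : r • a = a := by
  have hsplit : (r / 2) • a + (r / 2) • a = r • a := by module
  rw [← hsplit] at hra ⊢
  exact hP.smul_add_smul_eq_left hneg ha ha (half_pos hr0) (half_pos hr0) (by linarith) hra

lemma injOn_angle (hV : 1 < V.card) : Set.InjOn angle V := by
  intro a ha b hb hab
  have hne {v : ℝ × ℝ} (hv : v ∈ V) : v ≠ 0 := ne_of_mem_of_not_mem hv (hP.zero_notMem hneg hV)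
  obtain ⟨r, hr, rfl⟩ := exists_smul_eq_of_angle_eq (hne ha) (hne hb) hab
  rcases le_total r 1 with h | h
  · exact (hP.smul_eq_self hneg ha hr h hb).symm
  · have hinv : r⁻¹ • r • a = a := inv_smul_smul₀ hr.ne' a
    rw [← hP.smul_eq_self hneg hb (inv_pos.2 hr) (inv_le_one_of_one_le₀ h) (hinv.symm ▸ ha), hinv]

lemma wedge_lt_add {a b c : ℝ × ℝ} (ha : a ∈ V) (hb : b ∈ V) (hc : c ∈ V)
    (hab : 0 < wedge a b) (hbc : 0 < wedge b c) (hac : 0 < wedge a c) :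
    wedge a c < wedge a b + wedge b c := by
  by_contra! hle
  have hbac := eq_wedge_div_smul_add hac.ne' b
  have := hP.smul_add_smul_eq_left hneg ha hc (div_pos hbc hac) (div_pos hab hac)
    (by rw [← add_div, div_le_one hac, add_comm]; exact hle) (hbac ▸ hb)
  rw [← hbac] at this
  rw [this, wedge_self] at hab
  exact hab.false

lemma card_filter_angle_pos {m : ℕ} (hm : 0 < m) (hV : V.card = 2 * m) :
    {v ∈ V | 0 < angle v}.card = m := by
  have hne {v : ℝ × ℝ} (hv : v ∈ V) : v ≠ 0 :=
    ne_of_mem_of_not_mem hv (hP.zero_notMem hneg (by lia))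
  have hcard : {v ∈ V | 0 < angle v}.card = {v ∈ V | ¬0 < angle v}.card := by
    refine Finset.card_nbij' Neg.neg Neg.neg ?_ ?_ (fun _ _ => neg_neg _) (fun _ _ => neg_neg _)
    all_goals
      intro v hv
      simp only [Finset.coe_filter, Set.mem_ofPred_eq] at hv ⊢
    · exact ⟨hP.neg_mem hneg hv.1, by rw [angle_neg_pos_iff (hne hv.1)]; exact not_not.2 hv.2⟩
    · exact ⟨hP.neg_mem hneg hv.1, (angle_neg_pos_iff (hne hv.1)).2 hv.2⟩
  have := Finset.card_filter_add_card_filter_not (s := V) (fun v => 0 < angle v)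
  lia

lemma exists_antiperiodic_enumeration {m : ℕ} (hm : 0 < m) (hV : V.card = 2 * m) :
    ∃ q : ℤ → ℝ × ℝ, Function.Antiperiodic q m ∧ Set.range q = V ∧
      ∀ i j : ℤ, i < j → j < i + m → 0 < wedge (q i) (q j) := by
  obtain ⟨u, humono, hu⟩ := exists_strictMono_comp_range_eq
    (hP.card_filter_angle_pos hneg hm hV)
    ((hP.injOn_angle hneg (by lia)).mono (Finset.filter_subset _ V))
  obtain ⟨q, hq, hqu⟩ := exists_antiperiodic_extension hm u
  have hmem (i : Fin m) : u i ∈ V ∧ 0 < angle (u i) :=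
    Finset.mem_filter.1 (Finset.mem_coe.1 (hu ▸ Set.mem_range_self i))
  have hupper {v : ℝ × ℝ} (hv : v ∈ V) (hv0 : 0 < angle v) : ∃ i : Fin m, q (i : ℕ) = v := by
    obtain ⟨i, rfl⟩ := hu.ge (Finset.mem_coe.2 (Finset.mem_filter.2 ⟨hv, hv0⟩))
    exact ⟨i, hqu i⟩
  refine ⟨q, hq, (Set.range_subset_iff.2 fun j => ?_).antisymm fun v hv => ?_,
    wedge_pos_of_antiperiodic hq fun i j hi hij hj => ?_⟩
  · have hper : Function.Periodic (fun j => q j ∈ V) (m : ℤ) := fun j =>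
      propext ⟨fun h => by simpa [hq j] using hP.neg_mem hneg h,
        fun h => by simpa [hq j] using hP.neg_mem hneg h⟩
    obtain ⟨l, ⟨hl0, hlm⟩, hl⟩ := hper.exists_mem_Ico₀ (by lia) j
    lift l to ℕ using hl0
    exact hl.mpr (hqu ⟨l, by lia⟩ ▸ (hmem _).1)
  · by_cases hv0 : 0 < angle v
    · obtain ⟨i, rfl⟩ := hupper hv hv0
      exact Set.mem_range_self _
    · have hne : v ≠ 0 := ne_of_mem_of_not_mem hv (hP.zero_notMem hneg (by lia))
      obtain ⟨i, hi⟩ := hupper (hP.neg_mem hneg hv) ((angle_neg_pos_iff hne).2 hv0)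
      exact ⟨(i : ℕ) + m, by rw [hq, hi, neg_neg]⟩
  · lift i to ℕ using hi
    lift j to ℕ using by lia
    rw [show q i = u ⟨i, by lia⟩ from hqu ⟨i, _⟩, show q j = u ⟨j, by lia⟩ from hqu ⟨j, _⟩]
    exact wedge_pos_of_angle_lt (hmem _).2 (humono (Fin.mk_lt_mk.2 (by lia)))

lemma exists_eq_region {m : ℕ} (hm : 2 ≤ m) (hV : V.card = 2 * m) :
    ∃ q, IsSymmVertexCycle m q ∧ P = region q := by
  obtain ⟨q, hq, hrange, hpos⟩ := hP.exists_antiperiodic_enumeration hneg (by lia) hV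
  have hqV (j : ℤ) : q j ∈ V := Finset.mem_coe.1 (hrange ▸ Set.mem_range_self j)
  have hcycle : IsSymmVertexCycle m q := .of_wedge_lt hq hpos (fun i j l hij hjl hli =>
    hP.wedge_lt_add hneg (hqV i) (hqV j) (hqV l) (hpos i j hij (by lia)) (hpos j l hjl (by lia))
      (hpos i l (by lia) hli)) hm
  exact ⟨q, hcycle, by rw [hcycle.region_eq_convexHull, hrange, hP.1]⟩

end IsConvexPolygon

lemma IsCentrallySymmetric.exists_neg_vadd_eq {P : Set (ℝ × ℝ)} (h : IsCentrallySymmetric P) :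
    ∃ c : ℝ × ℝ, -(c +ᵥ P) = c +ᵥ P := by
  obtain ⟨c, hc⟩ := h
  have hsub : -(-c +ᵥ P) ⊆ -c +ᵥ P := by
    intro u hu
    rw [Set.mem_neg, Set.mem_vadd_set_iff_neg_vadd_mem] at hu
    rw [Set.mem_vadd_set_iff_neg_vadd_mem]
    convert hc _ hu using 1
    simp only [vadd_eq_add, neg_neg, two_smul]
    abel
  exact ⟨-c, hsub.antisymm (Set.neg_subset_neg.1 (by rwa [neg_neg]))⟩

lemma IsKFoldTranslativeTiling.vadd {ι : Type} {K : Set (ℝ × ℝ)} {x : ι → ℝ × ℝ} {k : ℕ}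
    (h : IsKFoldTranslativeTiling K x k) (c : ℝ × ℝ) :
    IsKFoldTranslativeTiling (c +ᵥ K) (fun i => x i - c) k := by
  obtain ⟨hdiscrete, hcover, hpack⟩ := h
  have hshift (p : ℝ × ℝ) (i : ι) (S : Set (ℝ × ℝ)) : p - (x i - c) ∈ c +ᵥ S ↔ p - x i ∈ S := by
    rw [Set.mem_vadd_set_iff_neg_vadd_mem, vadd_eq_add]
    congr! 1
    abel
  refine ⟨fun R => (hdiscrete (R + ‖c‖)).subset fun i hi => ?_, ?_, ?_⟩
  · exact (norm_le_norm_sub_add (x i) c).trans (by gcongr; exact hi)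
  · simpa only [hshift] using hcover
  · simpa only [interior_vadd, hshift] using hpack

/-- If a centrally symmetric convex dodecagon (a convex polygon with exactly 12 vertices,
symmetric about a point) admits a `k`-fold translative tiling of the plane, then
`k ≥ 6`; that is, `τ(P) ≥ 6`. -/
theorem tau_dodecagon_ge (P : Set (ℝ × ℝ)) (V : Finset (ℝ × ℝ))
    (hP : IsConvexPolygon P V) (hV : V.card = 12) (hsym : IsCentrallySymmetric P)
    (k : ℕ) (hk : 0 < k) (ι : Type) (x : ι → ℝ × ℝ)
    (htile : IsKFoldTranslativeTiling P x k) :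
    6 ≤ k := by
  obtain ⟨c, hneg⟩ := hsym.exists_neg_vadd_eq
  obtain ⟨q, hcycle, hregion⟩ := (hP.vadd c).exists_eq_region hneg (m := 6) (by norm_num)
    ((Finset.card_vadd_finset c V).trans hV)
  exact hcycle.six_le hk (hregion ▸ htile.vadd c)
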